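/- arXiv:2602.20086 — 2 statements merged into one kernel-verified Lean document; each statement's English description precedes it below -/
import Mathlib

section
/- Let ε > 0 and let N and H be sufficiently large integers with H ≥ N^{5ε}. Then there exists ε' > 0 (one may take ε' = (1+ε)log(1+ε) − ε) such that the number of integers n with N − H < n ≤ N satisfying Ω(n) > (1+ε)·log log N is ≪ H/(log N)^{ε'}, where Ω(n) denotes the number of prime factors of n counted with multiplicity. -/
open Finset

/-!
Take `Y = N ^ (4 / (ε log log N))`, so that an integer `n ≤ N` has at most `(ε / 4) log log N` prime
factors above `Y`. If `Ω(n) > (1 + ε) log log N`, then for `k` a small multiple of `log log N`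
either the primes up to `Y` contribute at least `2k` repetitions to `n`, or at least
`(1 + ε / 2) log log N` distinct primes up to `Y` divide `n`.

In the first case `n` is divisible by some `m ^ 2` with `2 ^ k ≤ m ≤ Y ^ k`, which is rare. The
second case is rare because the `k`-th factorial moment of the number of primes `p ≤ Y` dividing `n`
is at most `2 H (∑ p ≤ Y, 1 / p) ^ k`, with `∑ p ≤ Y, 1 / p ≤ (1 + ε / 8) log log N`. All the moduli
that occur are at most `Y ^ (2k)`, a small power of `N`, hence at most `H`. So the number of
exceptional `n` is at most `H` times an exponential in `-k`, that is, a negative power of `log N`.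
-/

section Intervals

variable {a b H : ℕ}

lemma card_filter_dvd_Ioc_le {d : ℕ} (hab : b ≤ a + H) (hd : 0 < d) (hdH : d ≤ H) :
    (#{n ∈ Ioc a b | d ∣ n} : ℝ) ≤ 2 * H / d := by
  have hquot : b / d ≤ a / d + (H / d + 1) := calc
    b / d ≤ (a + H) / d := Nat.div_le_div_right hab
    _ ≤ a / d + (H / d + 1) := by rw [Nat.add_div hd]; split_ifs <;> lia
  have hsub : {n ∈ Ioc a b | d ∣ n} ⊆ (Ioc (a / d) (b / d)).image (d * ·) := by
    intro n hn
    obtain ⟨hn, j, rfl⟩ := mem_filter.1 hn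
    obtain ⟨haj, hjb⟩ := mem_Ioc.1 hn
    rw [mul_comm] at haj hjb
    exact mem_image_of_mem _ (mem_Ioc.2
      ⟨(Nat.div_lt_iff_lt_mul hd).2 haj, (Nat.le_div_iff_mul_le hd).2 hjb⟩)
  have hcard : #{n ∈ Ioc a b | d ∣ n} ≤ H / d + 1 := calc
    #{n ∈ Ioc a b | d ∣ n} ≤ #(Ioc (a / d) (b / d)) := (card_le_card hsub).trans card_image_le
    _ ≤ H / d + 1 := by rw [Nat.card_Ioc]; lia
  have hone : (1 : ℝ) ≤ H / d := (one_le_div (by positivity)).2 (by exact_mod_cast hdH)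
  calc (#{n ∈ Ioc a b | d ∣ n} : ℝ) ≤ (H / d : ℕ) + 1 := by exact_mod_cast hcard
    _ ≤ H / d + H / d := add_le_add Nat.cast_div_le hone
    _ = 2 * H / d := by ring

lemma card_filter_exists_sq_dvd_Ioc_le {q M : ℕ} (hab : b ≤ a + H) (hq : 0 < q)
    (hMH : M ^ 2 ≤ H) :
    (#{n ∈ Ioc a b | ∃ m ∈ Icc q M, m ^ 2 ∣ n} : ℝ) ≤ 4 * H / q := by
  have hsub : {n ∈ Ioc a b | ∃ m ∈ Icc q M, m ^ 2 ∣ n} ⊆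
      (Icc q M).biUnion fun m ↦ {n ∈ Ioc a b | m ^ 2 ∣ n} := by
    intro n hn
    obtain ⟨hn, m, hm, hmn⟩ := mem_filter.1 hn
    exact mem_biUnion.2 ⟨m, hm, mem_filter.2 ⟨hn, hmn⟩⟩
  have hinv_sq : ∑ m ∈ Icc q M, ((m : ℝ) ^ 2)⁻¹ ≤ 2 / q := by
    have hIcc : Icc q M = Ioo (q - 1) (M + 1) := by
      ext m
      simp only [mem_Icc, mem_Ioo]
      lia
    rw [hIcc]
    simpa only [Nat.cast_pred hq, sub_add_cancel] using
      sum_Ioo_inv_sq_le (α := ℝ) (q - 1) (M + 1)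
  calc (#{n ∈ Ioc a b | ∃ m ∈ Icc q M, m ^ 2 ∣ n} : ℝ)
      ≤ ∑ m ∈ Icc q M, (#{n ∈ Ioc a b | m ^ 2 ∣ n} : ℝ) := by
        exact_mod_cast (card_le_card hsub).trans card_biUnion_le
    _ ≤ ∑ m ∈ Icc q M, 2 * H * ((m : ℝ) ^ 2)⁻¹ := by
        refine sum_le_sum fun m hm ↦ ?_
        obtain ⟨hqm, hmM⟩ := mem_Icc.1 hm
        have hm0 : 0 < m := hq.trans_le hqm
        have := card_filter_dvd_Ioc_le hab (pow_pos hm0 2) ((Nat.pow_le_pow_left hmM 2).trans hMH)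
        rwa [Nat.cast_pow, div_eq_mul_inv] at this
    _ ≤ 2 * H * (2 / q) := by rw [← mul_sum]; gcongr
    _ = 4 * H / q := by ring

lemma descFactorial_card_filter_dvd_le {P : Finset ℕ} (hP : ∀ p ∈ P, p.Prime) (k n : ℕ) :
    (#{p ∈ P | p ∣ n}).descFactorial k ≤
      #{f ∈ Fintype.piFinset fun _ : Fin k ↦ P | ∏ i, f i ∣ n} := by
  have hcard : (#{p ∈ P | p ∣ n}).descFactorial k =
      #(univ : Finset (Fin k ↪ {p ∈ P | p ∣ n})) := by
    rw [card_univ, Fintype.card_embedding_eq, Fintype.card_fin, Fintype.card_coe]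
  rw [hcard]
  -- A `k`-tuple of distinct primes dividing `n` has its product dividing `n`.
  refine card_le_card_of_injOn (fun f i ↦ (f i : ℕ)) (fun f _ ↦ ?_) fun f _ g _ h ↦ ?_
  · have hmem (i : Fin k) : (f i : ℕ) ∈ P ∧ (f i : ℕ) ∣ n := mem_filter.1 (f i).2
    refine mem_coe.2 (mem_filter.2 ⟨Fintype.mem_piFinset.2 fun i ↦ (hmem i).1, ?_⟩)
    refine Fintype.prod_dvd_of_isRelPrime (fun i j hij ↦ ?_) fun i ↦ (hmem i).2
    exact Nat.coprime_iff_isRelPrime.1 <|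
      (Nat.coprime_primes (hP _ (hmem i).1) (hP _ (hmem j).1)).2 fun h ↦
        hij (f.injective (Subtype.ext h))
  · ext i
    exact congrFun h i

lemma sum_descFactorial_card_filter_dvd_le {P : Finset ℕ} {Y k : ℕ} (hab : b ≤ a + H)
    (hP : ∀ p ∈ P, p.Prime) (hPY : ∀ p ∈ P, p ≤ Y) (hYH : Y ^ k ≤ H) :
    ∑ n ∈ Ioc a b, ((#{p ∈ P | p ∣ n}).descFactorial k : ℝ) ≤
      2 * H * (∑ p ∈ P, (p : ℝ)⁻¹) ^ k := by
  calc ∑ n ∈ Ioc a b, ((#{p ∈ P | p ∣ n}).descFactorial k : ℝ)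
      ≤ ∑ n ∈ Ioc a b, (#{f ∈ Fintype.piFinset fun _ : Fin k ↦ P | ∏ i, f i ∣ n} : ℝ) := by
        gcongr with n
        exact descFactorial_card_filter_dvd_le hP k n
    _ = ∑ f ∈ Fintype.piFinset fun _ : Fin k ↦ P, (#{n ∈ Ioc a b | ∏ i, f i ∣ n} : ℝ) := by
        exact_mod_cast sum_card_bipartiteAbove_eq_sum_card_bipartiteBelow
          fun n (f : Fin k → ℕ) ↦ ∏ i, f i ∣ n
    _ ≤ ∑ f ∈ Fintype.piFinset fun _ : Fin k ↦ P, 2 * H * ∏ i, (f i : ℝ)⁻¹ := by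
        refine sum_le_sum fun f hf ↦ ?_
        have hfP (i : Fin k) : f i ∈ P := Fintype.mem_piFinset.1 hf i
        have hprod : ∏ i, f i ≤ Y ^ k := by
          simpa using prod_le_pow_card univ f Y fun i _ ↦ hPY _ (hfP i)
        have := card_filter_dvd_Ioc_le hab (prod_pos fun i _ ↦ (hP _ (hfP i)).pos)
          (hprod.trans hYH)
        rwa [Nat.cast_prod, div_eq_mul_inv, ← prod_inv_distrib] at this
    _ = 2 * H * (∑ p ∈ P, (p : ℝ)⁻¹) ^ k := by rw [← mul_sum, sum_pow']

lemma card_filter_le_card_filter_dvd_mul_descFactorial_le {P : Finset ℕ} {Y k T : ℕ}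
    (hab : b ≤ a + H) (hP : ∀ p ∈ P, p.Prime) (hPY : ∀ p ∈ P, p ≤ Y) (hYH : Y ^ k ≤ H) :
    (#{n ∈ Ioc a b | T ≤ #{p ∈ P | p ∣ n}} : ℝ) * T.descFactorial k ≤
      2 * H * (∑ p ∈ P, (p : ℝ)⁻¹) ^ k := by
  refine le_trans ?_ (sum_descFactorial_card_filter_dvd_le hab hP hPY hYH)
  rw [← nsmul_eq_mul]
  refine (card_nsmul_le_sum _ _ _ fun n hn ↦ ?_).trans
    (sum_le_sum_of_subset_of_nonneg (filter_subset _ _) fun n _ _ ↦ by positivity)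
  exact_mod_cast Nat.descFactorial_le k (mem_filter.1 hn).2

end Intervals

section SmallPrimeFactors

/-- The prime factors of `n` that are at most `Y`, with multiplicity. Its cardinality and that of
its `dedup` are the truncations to primes `p ≤ Y` of `Ω(n)` and `ω(n)`. -/
def smallPrimeFactors (Y n : ℕ) : Multiset ℕ :=
  (n.primeFactorsList : Multiset ℕ).filter (· ≤ Y)

variable {Y n : ℕ}

lemma mem_smallPrimeFactors (hn : n ≠ 0) {p : ℕ} :
    p ∈ smallPrimeFactors Y n ↔ (p.Prime ∧ p ∣ n) ∧ p ≤ Y := by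
  rw [smallPrimeFactors, Multiset.mem_filter, Multiset.mem_coe, Nat.mem_primeFactorsList hn]

lemma card_dedup_smallPrimeFactors (hn : n ≠ 0) :
    (smallPrimeFactors Y n).dedup.card = #{p ∈ Y.primesLE | p ∣ n} := by
  rw [← Multiset.toFinset_val, card_val]
  congr 1
  ext p
  rw [Multiset.mem_toFinset, mem_smallPrimeFactors hn, mem_filter, Nat.mem_primesLE]
  tauto

lemma length_primeFactorsList_le_card_smallPrimeFactors_add (hY : 0 < Y) (hn : n ≠ 0) :
    (n.primeFactorsList.length : ℝ) ≤
      (smallPrimeFactors Y n).card + Real.log n / Real.log (Y + 1) := by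
  set large := (n.primeFactorsList : Multiset ℕ).filter (¬ · ≤ Y)
  have hsplit : smallPrimeFactors Y n + large = n.primeFactorsList := Multiset.filter_add_not _ _
  have hlength : n.primeFactorsList.length = (smallPrimeFactors Y n).card + large.card := by
    rw [← Multiset.card_add, hsplit, Multiset.coe_card]
  have hdvd : large.prod ∣ n := by
    have := Multiset.prod_dvd_prod_of_le (Multiset.filter_le (¬ · ≤ Y) n.primeFactorsList)
    rwa [Multiset.prod_coe, Nat.prod_primeFactorsList hn] at this
  have hpow : (Y + 1) ^ large.card ≤ n :=
    (Multiset.pow_card_le_prod fun p hp ↦ not_le.1 (Multiset.mem_filter.1 hp).2).trans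
      (Nat.le_of_dvd (Nat.pos_of_ne_zero hn) hdvd)
  have hlog : large.card * Real.log (Y + 1) ≤ Real.log n := by
    rw [← Real.log_pow]
    exact Real.log_le_log (by positivity) (by exact_mod_cast hpow)
  have hlogY : 0 < Real.log (Y + 1) := Real.log_pos (by simpa using hY)
  rw [hlength, Nat.cast_add]
  gcongr
  exact (le_div_iff₀ hlogY).2 hlog

lemma exists_card_eq_and_add_self_le {α : Type*} [DecidableEq α] (k : ℕ) (s : Multiset α)
    (hs : s.dedup.card + 2 * k ≤ s.card) : ∃ t : Multiset α, t.card = k ∧ t + t ≤ s := by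
  induction k generalizing s with
  | zero => exact ⟨0, by simp⟩
  | succ k ih =>
    have hdup : ¬ s.Nodup := fun h ↦ by rw [h.dedup] at hs; lia
    obtain ⟨x, hx⟩ : ∃ x, x ::ₘ x ::ₘ 0 ≤ s := by
      simpa only [Multiset.nodup_iff_le, not_forall, not_not] using hdup
    obtain ⟨u, rfl⟩ := Multiset.le_iff_exists_add.1 hx
    have hdedup : u.dedup.card ≤ ((x ::ₘ x ::ₘ 0) + u).dedup.card :=
      Multiset.card_le_card <| Multiset.le_dedup.2
        ⟨(Multiset.dedup_le u).trans (Multiset.le_add_left _ _), Multiset.nodup_dedup u⟩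
    simp only [Multiset.card_add, Multiset.card_cons, Multiset.card_zero] at hs
    obtain ⟨t, rfl, htu⟩ := ih u (by lia)
    refine ⟨x ::ₘ t, Multiset.card_cons _ _, ?_⟩
    calc x ::ₘ t + x ::ₘ t = (x ::ₘ x ::ₘ 0) + (t + t) := by
          simp only [Multiset.cons_add, Multiset.add_cons, Multiset.zero_add]
      _ ≤ (x ::ₘ x ::ₘ 0) + u := by gcongr

lemma exists_sq_dvd_of_card_dedup_smallPrimeFactors_add_le {k : ℕ} (hn : n ≠ 0)
    (h : (smallPrimeFactors Y n).dedup.card + 2 * k ≤ (smallPrimeFactors Y n).card) :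
    ∃ m ∈ Icc (2 ^ k) (Y ^ k), m ^ 2 ∣ n := by
  obtain ⟨t, rfl, ht⟩ := exists_card_eq_and_add_self_le k _ h
  have hmem {p : ℕ} (hp : p ∈ t) : (p.Prime ∧ p ∣ n) ∧ p ≤ Y :=
    (mem_smallPrimeFactors hn).1 (Multiset.mem_of_le ht (Multiset.mem_add.2 (.inl hp)))
  refine ⟨t.prod, mem_Icc.2 ⟨?_, ?_⟩, ?_⟩
  · exact Multiset.pow_card_le_prod fun p hp ↦ (hmem hp).1.1.two_le
  · exact Multiset.prod_le_pow_card _ _ fun p hp ↦ (hmem hp).2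
  · have := Multiset.prod_dvd_prod_of_le (ht.trans (Multiset.filter_le _ _))
    rwa [Multiset.prod_add, Multiset.prod_coe, Nat.prod_primeFactorsList hn, ← pow_two] at this

lemma exists_sq_dvd_or_le_card_primesLE_dvd {k T : ℕ} (hY : 0 < Y) (hn : n ≠ 0)
    (h : T + 2 * k + Real.log n / Real.log (Y + 1) ≤ n.primeFactorsList.length) :
    (∃ m ∈ Icc (2 ^ k) (Y ^ k), m ^ 2 ∣ n) ∨ T ≤ #{p ∈ Y.primesLE | p ∣ n} := by
  refine or_iff_not_imp_left.2 fun hsq ↦ ?_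
  have hrepeated : ((smallPrimeFactors Y n).card : ℝ) ≤
      (smallPrimeFactors Y n).dedup.card + 2 * k :=
    mod_cast (not_le.1 (mt (exists_sq_dvd_of_card_dedup_smallPrimeFactors_add_le hn) hsq)).le
  have hlength := length_primeFactorsList_le_card_smallPrimeFactors_add hY hn
  rw [← card_dedup_smallPrimeFactors hn]
  exact_mod_cast (by linarith : (T : ℝ) ≤ (smallPrimeFactors Y n).dedup.card)

end SmallPrimeFactors

section TailBound

variable {a b H Y k T : ℕ}

lemma card_filter_lt_length_primeFactorsList_le_add {t : ℝ} (hab : b ≤ a + H) (hY : 0 < Y)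
    (hYH : Y ^ (2 * k) ≤ H) (ht : T + 2 * k + Real.log b / Real.log (Y + 1) ≤ t) :
    (#{n ∈ Ioc a b | t < (n.primeFactorsList.length : ℝ)} : ℝ) ≤
      4 * H / 2 ^ k + #{n ∈ Ioc a b | T ≤ #{p ∈ Y.primesLE | p ∣ n}} := by
  have hsub : {n ∈ Ioc a b | t < (n.primeFactorsList.length : ℝ)} ⊆
      {n ∈ Ioc a b | ∃ m ∈ Icc (2 ^ k : ℕ) (Y ^ k), m ^ 2 ∣ n} ∪
        {n ∈ Ioc a b | T ≤ #{p ∈ Y.primesLE | p ∣ n}} := by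
    intro n hn
    obtain ⟨hnab, htn⟩ := mem_filter.1 hn
    obtain ⟨han, hnb⟩ := mem_Ioc.1 hnab
    have hlog : Real.log n / Real.log (Y + 1) ≤ Real.log b / Real.log (Y + 1) := by
      gcongr
      · exact Real.log_nonneg (by simp)
      · exact_mod_cast Nat.zero_lt_of_lt han
    rw [← filter_or]
    exact mem_filter.2
      ⟨hnab, exists_sq_dvd_or_le_card_primesLE_dvd hY (Nat.ne_zero_of_lt han) (by linarith)⟩
  calc (#{n ∈ Ioc a b | t < (n.primeFactorsList.length : ℝ)} : ℝ)
      ≤ #{n ∈ Ioc a b | ∃ m ∈ Icc (2 ^ k : ℕ) (Y ^ k), m ^ 2 ∣ n} +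
          #{n ∈ Ioc a b | T ≤ #{p ∈ Y.primesLE | p ∣ n}} :=
        mod_cast (card_le_card hsub).trans (card_union_le _ _)
    _ ≤ 4 * H / 2 ^ k + #{n ∈ Ioc a b | T ≤ #{p ∈ Y.primesLE | p ∣ n}} := by
        gcongr
        simpa only [Nat.cast_pow, Nat.cast_two] using
          card_filter_exists_sq_dvd_Ioc_le (q := 2 ^ k) hab (by positivity)
            (by rwa [← pow_mul, mul_comm])

lemma card_filter_le_card_primesLE_dvd_le_mul_pow {ρ : ℝ} (hab : b ≤ a + H)
    (hYH : Y ^ k ≤ H) (hkT : k < T) (hρ : ∑ p ∈ Y.primesLE, (p : ℝ)⁻¹ ≤ ρ * (T - k)) :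
    (#{n ∈ Ioc a b | T ≤ #{p ∈ Y.primesLE | p ∣ n}} : ℝ) ≤ 2 * H * ρ ^ k := by
  have hTk : (0 : ℝ) < T - k := sub_pos.2 (by exact_mod_cast hkT)
  have hpow : ((T : ℝ) - k) ^ k ≤ T.descFactorial k := by
    rw [← Nat.cast_sub hkT.le]
    exact_mod_cast (Nat.pow_le_pow_left (by lia) k).trans (Nat.pow_sub_le_descFactorial T k)
  refine le_of_mul_le_mul_right ?_ (pow_pos hTk k)
  calc (#{n ∈ Ioc a b | T ≤ #{p ∈ Y.primesLE | p ∣ n}} : ℝ) * (T - k) ^ k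
      ≤ #{n ∈ Ioc a b | T ≤ #{p ∈ Y.primesLE | p ∣ n}} * T.descFactorial k := by gcongr
    _ ≤ 2 * H * (∑ p ∈ Y.primesLE, (p : ℝ)⁻¹) ^ k :=
        card_filter_le_card_filter_dvd_mul_descFactorial_le hab
          (fun _ ↦ Nat.prime_of_mem_primesLE) (fun _ ↦ Nat.le_of_mem_primesLE) hYH
    _ ≤ 2 * H * (ρ * (T - k)) ^ k := by gcongr
    _ = 2 * H * ρ ^ k * (T - k) ^ k := by rw [mul_pow]; ring

lemma card_filter_lt_length_primeFactorsList_le_mul_pow {t ρ : ℝ} (hab : b ≤ a + H) (hY : 0 < Y)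
    (hYH : Y ^ (2 * k) ≤ H) (hkT : k < T) (hρ_half : 1 / 2 ≤ ρ)
    (hρ : ∑ p ∈ Y.primesLE, (p : ℝ)⁻¹ ≤ ρ * (T - k))
    (ht : T + 2 * k + Real.log b / Real.log (Y + 1) ≤ t) :
    (#{n ∈ Ioc a b | t < (n.primeFactorsList.length : ℝ)} : ℝ) ≤ 6 * H * ρ ^ k := by
  have hYkH : Y ^ k ≤ H := (Nat.pow_le_pow_right hY (by lia)).trans hYH
  calc (#{n ∈ Ioc a b | t < (n.primeFactorsList.length : ℝ)} : ℝ)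
      ≤ 4 * H / 2 ^ k + #{n ∈ Ioc a b | T ≤ #{p ∈ Y.primesLE | p ∣ n}} :=
        card_filter_lt_length_primeFactorsList_le_add hab hY hYH ht
    _ ≤ 4 * H * (1 / 2) ^ k + 2 * H * ρ ^ k := by
        rw [one_div_pow, mul_one_div]
        gcongr
        exact card_filter_le_card_primesLE_dvd_le_mul_pow hab hYkH hkT hρ
    _ ≤ 4 * H * ρ ^ k + 2 * H * ρ ^ k := by gcongr
    _ = 6 * H * ρ ^ k := by ring

end TailBound

section SumOverPrimes

open Filter

lemma exp_sum_primesLE_le_tsum {f : ℕ →* ℝ} (hf : Summable f) (hf0 : ∀ n, 0 ≤ f n) (x : ℕ) :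
    Real.exp (∑ p ∈ x.primesLE, f p) ≤ ∑' n, f n := by
  have hfactor (p : ℕ) (hp : p ∈ x.primesLE) : Real.exp (f p) ≤ (1 - f p)⁻¹ := by
    have hlt : f p < 1 :=
      (le_abs_self _).trans_lt (hf.norm_lt_one (Nat.prime_of_mem_primesLE hp).one_lt)
    rw [le_inv_comm₀ (Real.exp_pos _) (sub_pos.2 hlt), ← Real.exp_neg]
    exact Real.one_sub_le_exp_neg _
  calc Real.exp (∑ p ∈ x.primesLE, f p) = ∏ p ∈ x.primesLE, Real.exp (f p) := Real.exp_sum _ _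
    _ ≤ ∏ p ∈ x.primesLE, (1 - f p)⁻¹ := prod_le_prod (fun _ _ ↦ (Real.exp_pos _).le) hfactor
    _ = ∑' m : (x + 1).smoothNumbers, f m :=
        EulerProduct.prod_primesBelow_geometric_eq_tsum_smoothNumbers hf (x + 1)
    _ ≤ ∑' n, f n := hf.tsum_subtype_le f _ hf0

lemma tsum_nat_rpow_neg_le {s : ℝ} (hs : 1 < s) : ∑' n : ℕ, (n : ℝ) ^ (-s) ≤ 1 + 1 / (s - 1) := by
  have hshift : ∑' n : ℕ, (n : ℝ) ^ (-s) = ∑' n : ℕ, 1 / (n + 1 : ℝ) ^ s := by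
    rw [(Real.summable_nat_rpow.2 (neg_lt_neg hs)).tsum_eq_zero_add, Nat.cast_zero,
      Real.zero_rpow (by linarith), zero_add]
    refine tsum_congr fun n ↦ ?_
    rw [Real.rpow_neg (by positivity), one_div, Nat.cast_succ]
  have hterm : 0 ≤ s * ZetaAsymptotics.termTSum s :=
    mul_nonneg (by linarith) (tsum_nonneg fun n ↦ ZetaAsymptotics.term_nonneg _ _)
  linarith [ZetaAsymptotics.zeta_limit_aux1 hs]

lemma sum_primesLE_rpow_neg_le_log {s : ℝ} (hs : 1 < s) (x : ℕ) :
    ∑ p ∈ x.primesLE, (p : ℝ) ^ (-s) ≤ Real.log (1 + 1 / (s - 1)) := by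
  let f : ℕ →* ℝ :=
    { toFun := fun n ↦ (n : ℝ) ^ (-s)
      map_one' := by simp
      map_mul' := fun m n ↦ by
        rw [Nat.cast_mul, Real.mul_rpow (Nat.cast_nonneg _) (Nat.cast_nonneg _)] }
  have hf : Summable f := Real.summable_nat_rpow.2 (neg_lt_neg hs)
  rw [Real.le_log_iff_exp_le (add_pos one_pos (one_div_pos.2 (sub_pos.2 hs)))]
  exact (exp_sum_primesLE_le_tsum hf (fun n ↦ Real.rpow_nonneg (Nat.cast_nonneg n) _) x).trans
    (tsum_nat_rpow_neg_le hs)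

lemma sum_primesLE_inv_le {x : ℕ} (hx : 1 < x) {η : ℝ} (hη : 0 < η) :
    ∑ p ∈ x.primesLE, (p : ℝ)⁻¹ ≤ Real.exp η * Real.log (1 + Real.log x / η) := by
  -- With `s = 1 + η / log x`, replacing `p⁻¹` by `p ^ (-s)` costs at most a factor `exp η`.
  have hlog : 0 < Real.log x := Real.log_pos (by exact_mod_cast hx)
  have hs : 1 < 1 + η / Real.log x := lt_add_of_pos_right _ (by positivity)
  have hterm (p : ℕ) (hp : p ∈ x.primesLE) :
      (p : ℝ)⁻¹ ≤ Real.exp η * (p : ℝ) ^ (-(1 + η / Real.log x)) := by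
    have hp0 : (0 : ℝ) < p := by exact_mod_cast (Nat.prime_of_mem_primesLE hp).pos
    have hpx : Real.log p ≤ Real.log x :=
      Real.log_le_log hp0 (by exact_mod_cast Nat.le_of_mem_primesLE hp)
    have hexponent : Real.log p * (η / Real.log x) ≤ η := by
      rw [mul_div_left_comm]
      exact mul_le_of_le_one_right hη.le ((div_le_one hlog).2 hpx)
    rw [neg_add, Real.rpow_add hp0, Real.rpow_neg_one, mul_left_comm, Real.rpow_def_of_pos hp0,
      ← Real.exp_add]
    exact le_mul_of_one_le_right (by positivity) (Real.one_le_exp (by linarith))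
  calc ∑ p ∈ x.primesLE, (p : ℝ)⁻¹
      ≤ Real.exp η * ∑ p ∈ x.primesLE, (p : ℝ) ^ (-(1 + η / Real.log x)) := by
        rw [mul_sum]; exact sum_le_sum hterm
    _ ≤ Real.exp η * Real.log (1 + 1 / (1 + η / Real.log x - 1)) := by
        gcongr; exact sum_primesLE_rpow_neg_le_log hs x
    _ = Real.exp η * Real.log (1 + Real.log x / η) := by rw [add_sub_cancel_left, one_div_div]

lemma eventually_log_one_add_div_le {A η : ℝ} (hA : 1 < A) (hη : 0 < η) :
    ∀ᶠ u : ℝ in atTop, Real.log (1 + u / η) ≤ A * Real.log u := by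
  filter_upwards [eventually_ge_atTop 1,
    Real.tendsto_log_atTop.eventually_ge_atTop (Real.log (1 + 1 / η) / (A - 1))] with u hu hlog
  rw [div_le_iff₀ (sub_pos.2 hA)] at hlog
  calc Real.log (1 + u / η) ≤ Real.log (u * (1 + 1 / η)) := by
        refine Real.log_le_log (by positivity) ?_
        rw [mul_add, mul_one, mul_one_div]
        gcongr
    _ = Real.log u + Real.log (1 + 1 / η) := Real.log_mul (by positivity) (by positivity)
    _ ≤ A * Real.log u := by linarith

lemma tendsto_log_natCast_atTop : Tendsto (fun N : ℕ ↦ Real.log N) atTop atTop :=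
  Real.tendsto_log_atTop.comp tendsto_natCast_atTop_atTop

lemma eventually_sum_primesLE_inv_le {A : ℝ} (hA : 1 < A) :
    ∀ᶠ x : ℕ in atTop, ∑ p ∈ x.primesLE, (p : ℝ)⁻¹ ≤ A * Real.log (Real.log x) := by
  have hsqrt : 1 < √A := Real.lt_sqrt_of_sq_lt (by simpa using hA)
  have hη : 0 < Real.log √A := Real.log_pos hsqrt
  filter_upwards [eventually_gt_atTop 1,
    tendsto_log_natCast_atTop.eventually (eventually_log_one_add_div_le hsqrt hη)] with x hx hlog
  calc ∑ p ∈ x.primesLE, (p : ℝ)⁻¹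
      ≤ √A * Real.log (1 + Real.log x / Real.log √A) := by
        simpa only [Real.exp_log (one_pos.trans hsqrt)] using sum_primesLE_inv_le hx hη
    _ ≤ √A * (√A * Real.log (Real.log x)) := by gcongr
    _ = A * Real.log (Real.log x) := by
        rw [← mul_assoc, Real.mul_self_sqrt (one_pos.trans hA).le]

end SumOverPrimes

section Parameters

open Filter

lemma exists_nat_pow_le_rpow_and_log_div_log_le {N : ℕ} (hN : 0 < N) {z : ℝ} (hz : 1 ≤ z) :
    ∃ Y : ℕ, 0 < Y ∧ Y ≤ N ∧ Real.log N / Real.log (Y + 1) ≤ z ∧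
      ∀ m : ℕ, (Y : ℝ) ^ m ≤ (N : ℝ) ^ (m / z) := by
  have hN1 : (1 : ℝ) ≤ N := by exact_mod_cast hN
  have hz0 : 0 < z := one_pos.trans_le hz
  have hfloor : (⌊(N : ℝ) ^ (1 / z)⌋₊ : ℝ) ≤ (N : ℝ) ^ (1 / z) := Nat.floor_le (by positivity)
  have hpos : 0 < ⌊(N : ℝ) ^ (1 / z)⌋₊ :=
    Nat.floor_pos.2 (Real.one_le_rpow hN1 (by positivity))
  refine ⟨⌊(N : ℝ) ^ (1 / z)⌋₊, hpos, ?_, ?_, fun m ↦ ?_⟩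
  · have : (N : ℝ) ^ (1 / z) ≤ N := Real.rpow_le_self_of_one_le hN1 ((div_le_one hz0).2 hz)
    exact_mod_cast hfloor.trans this
  · have hlog : 1 / z * Real.log N ≤ Real.log (⌊(N : ℝ) ^ (1 / z)⌋₊ + 1) := by
      rw [← Real.log_rpow (by positivity)]
      exact Real.log_le_log (by positivity) (Nat.lt_floor_add_one _).le
    rw [div_le_iff₀ (Real.log_pos (by simpa using hpos))]
    rwa [one_div_mul_eq_div, div_le_iff₀' hz0] at hlog
  · calc (⌊(N : ℝ) ^ (1 / z)⌋₊ : ℝ) ^ m ≤ ((N : ℝ) ^ (1 / z)) ^ m := by gcongr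
      _ = (N : ℝ) ^ (m / z) := by
        rw [← Real.rpow_mul_natCast (by positivity), one_div_mul_eq_div]

lemma pow_le_inv_div_rpow {ρ c u : ℝ} {k : ℕ} (hρ0 : 0 < ρ) (hρ1 : ρ < 1) (hu : 0 < u)
    (hk : c * Real.log u ≤ k + 1) : ρ ^ k ≤ ρ⁻¹ / u ^ (c * -Real.log ρ) := by
  have hρk : ρ ^ (k + 1) ≤ ρ ^ (c * Real.log u) := by
    rw [← Real.rpow_natCast]
    exact Real.rpow_le_rpow_of_exponent_ge hρ0 hρ1.le (by exact_mod_cast hk)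
  calc ρ ^ k = ρ⁻¹ * ρ ^ (k + 1) := by rw [pow_succ']; field_simp
    _ ≤ ρ⁻¹ * ρ ^ (c * Real.log u) := by gcongr
    _ = ρ⁻¹ / u ^ (c * -Real.log ρ) := by
      rw [div_eq_mul_inv, ← Real.rpow_neg hu.le, Real.rpow_def_of_pos hρ0,
        Real.rpow_def_of_pos hu]
      ring_nf

lemma eventually_card_filter_lt_length_primeFactorsList_le {ε δ c : ℝ} (hε : 0 < ε) (hc : 0 < c)
    (hcε : c ≤ ε / 16) (hcδ : c ≤ ε * δ / 8) :
    ∀ᶠ N : ℕ in atTop, ∀ H : ℕ, (N : ℝ) ^ δ ≤ H →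
      (#{n ∈ Ioc (N - H) N |
          (1 + ε) * Real.log (Real.log N) < (n.primeFactorsList.length : ℝ)} : ℝ) ≤
        6 * H * ((1 + ε / 8) / (1 + ε / 4)) ^ ⌊c * Real.log (Real.log N)⌋₊ := by
  filter_upwards [eventually_gt_atTop 0,
    (Real.tendsto_log_atTop.comp tendsto_log_natCast_atTop).eventually_ge_atTop (8 / ε),
    eventually_sum_primesLE_inv_le (by linarith : 1 < 1 + ε / 8)] with N hN hL hprimes H hH
  rw [Function.comp_apply, div_le_iff₀' hε] at hL
  set L := Real.log (Real.log N)
  have hL0 : 0 < L := pos_of_mul_pos_right (by linarith : 0 < ε * L) hε.le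
  set k := ⌊c * L⌋₊
  set T := ⌈(1 + ε / 2) * L⌉₊
  have hk : (k : ℝ) ≤ c * L := Nat.floor_le (by positivity)
  have hkε : (k : ℝ) ≤ ε / 16 * L := hk.trans (by gcongr)
  have hT : (1 + ε / 2) * L ≤ T := Nat.le_ceil _
  have hT' : (T : ℝ) < (1 + ε / 2) * L + 1 := Nat.ceil_lt_add_one (by positivity)
  have hTk : (1 + ε / 4) * L ≤ T - k := by linarith
  obtain ⟨Y, hY, hYN, hlog, hpow⟩ :=
    exists_nat_pow_le_rpow_and_log_div_log_le hN (by linarith : 1 ≤ ε / 4 * L)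
  refine card_filter_lt_length_primeFactorsList_le_mul_pow (Y := Y) (T := T) (by lia) hY ?_ ?_ ?_ ?_
    (by linarith)
  · have hexponent : ((2 * k : ℕ) : ℝ) / (ε / 4 * L) ≤ δ := by
      rw [div_le_iff₀ (by positivity), Nat.cast_mul, Nat.cast_two]
      linarith [hk.trans (mul_le_mul_of_nonneg_right hcδ hL0.le)]
    have hN1 : (1 : ℝ) ≤ N := by exact_mod_cast hN
    exact_mod_cast (hpow _).trans ((Real.rpow_le_rpow_of_exponent_le hN1 hexponent).trans hH)
  · have : (0 : ℝ) < T - k := (by positivity : 0 < (1 + ε / 4) * L).trans_le hTk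
    exact_mod_cast sub_pos.1 this
  · rw [div_le_div_iff₀ two_pos (by positivity)]
    linarith
  · calc ∑ p ∈ Y.primesLE, (p : ℝ)⁻¹ ≤ ∑ p ∈ N.primesLE, (p : ℝ)⁻¹ :=
          sum_le_sum_of_subset_of_nonneg (Nat.primesLE_mono hYN) fun p _ _ ↦ by positivity
      _ ≤ (1 + ε / 8) * L := hprimes
      _ = (1 + ε / 8) / (1 + ε / 4) * ((1 + ε / 4) * L) := by field_simp
      _ ≤ (1 + ε / 8) / (1 + ε / 4) * (T - k) := by gcongr

end Parameters

theorem stmt_1_general (ε δ : ℝ) (hε : 0 < ε) (hδ : 0 < δ) :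
    ∃ ε' : ℝ, 0 < ε' ∧ ∃ C : ℝ, 0 < C ∧ ∃ N₀ : ℕ, ∀ N H : ℕ,
      N₀ ≤ N → (N : ℝ) ^ δ ≤ (H : ℝ) →
      (((Finset.Ioc (N - H) N).filter
          (fun n => (1 + ε) * Real.log (Real.log N) < (n.primeFactorsList.length : ℝ))).card : ℝ)
        ≤ C * (H : ℝ) / (Real.log N) ^ ε' := by
  set c := min (ε / 16) (ε * δ / 8)
  set ρ := (1 + ε / 8) / (1 + ε / 4)
  have hc : 0 < c := by positivity
  have hρ0 : 0 < ρ := by positivity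
  have hρ1 : ρ < 1 := (div_lt_one (by positivity)).2 (by linarith)
  obtain ⟨N₀, hN₀⟩ := Filter.eventually_atTop.1
    ((eventually_card_filter_lt_length_primeFactorsList_le hε hc (min_le_left _ _)
      (min_le_right _ _)).and (tendsto_log_natCast_atTop.eventually_gt_atTop 0))
  refine ⟨c * -Real.log ρ, mul_pos hc (neg_pos.2 (Real.log_neg hρ0 hρ1)), 6 * ρ⁻¹, by positivity,
    N₀, fun N H hN hH ↦ ?_⟩
  obtain ⟨hcard, hlog⟩ := hN₀ N hN
  calc _ ≤ 6 * H * ρ ^ ⌊c * Real.log (Real.log N)⌋₊ := hcard H hH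
    _ ≤ 6 * H * (ρ⁻¹ / Real.log N ^ (c * -Real.log ρ)) := by
      gcongr
      exact pow_le_inv_div_rpow hρ0 hρ1 hlog (Nat.lt_floor_add_one _).le
    _ = 6 * ρ⁻¹ * H / Real.log N ^ (c * -Real.log ρ) := by ring

/-- For `ε > 0` and `N, H` sufficiently large with `H ≥ N^{5ε}`, there is `ε' > 0`
such that the number of `n ∈ (N - H, N]` with `Ω(n) > (1+ε) log log N` is
`≪ H / (log N)^{ε'}`, where `Ω` counts prime factors with multiplicity. -/
theorem stmt_1 (ε : ℝ) (hε : 0 < ε) :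
    ∃ ε' : ℝ, 0 < ε' ∧ ∃ C : ℝ, 0 < C ∧ ∃ N₀ : ℕ, ∀ N H : ℕ,
      N₀ ≤ N → N₀ ≤ H → (N : ℝ) ^ (5 * ε) ≤ (H : ℝ) →
      (((Finset.Ioc (N - H) N).filter
          (fun n => (1 + ε) * Real.log (Real.log N) < (n.primeFactorsList.length : ℝ))).card : ℝ)
        ≤ C * (H : ℝ) / (Real.log N) ^ ε' := by
  obtain ⟨ε', hε', C, hC, N₀, h⟩ := stmt_1_general ε (5 * ε) hε (by positivity)
  exact ⟨ε', hε', C, hC, N₀, fun N H hN _ hH ↦ h N H hN hH⟩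
end

section
/- Let k ≥ 2 and let ε ≥ 0 be sufficiently small. Let Y₁, …, Y_k be mean-zero, variance-one, jointly Gaussian random variables with E[Y_{l₁} Y_{l₂}] ≤ ε whenever l₁ ≠ l₂. Then for any δ with 100ε ≤ δ ≤ 1/100, P(max_{1≤l≤k} Yₗ ≤ √((2−δ) log k)) ≤ exp(−Θ(k^{δ/20}/√(log k))) + k^{−δ²/(50ε)}. -/
open MeasureTheory Finset ProbabilityTheory

/-! Slepian's lemma reduces the theorem to the equicorrelated vector `√ε W + √(1 - ε) Zᵢ`, with `W`
and the `Zᵢ` independent standard Gaussian variables. If all its coordinates are at most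
`u = √((2 - δ) log k)` and `u + √ε t = √(1 - ε) v`, then `W ≤ -t` or `Zᵢ ≤ v` for all `i`. For
`t = δ √(log k) / (5 √ε)` the first event has probability at most
`exp (-t² / 2) = k ^ (-δ² / (50 ε))`, and since `v² ≤ 2 (1 - δ / 20) log k` the second one has
probability at most `exp (-c k ^ (δ / 20) / √(log k))`.

Slepian's lemma is proved by interpolating between the two Gaussian laws `ν` and `ν'` through
`√(1 - t) Y + √t Y'`. A step of length `h` replaces an independent summand `√h Y` by `√h Y'`; by a
second-order Taylor expansion this changes `E F` by half the difference of the second-order terms,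
up to an error `O(h ^ (3 / 2))` that vanishes in the limit. For `F` a product of nonnegative
decreasing functions of the coordinates, the mixed second derivatives are nonnegative, so `E F`
increases with the off-diagonal covariances.
-/

open Measure
open scoped NNReal Topology

section Calculus

variable {E G : Type*} [NormedAddCommGroup E] [NormedSpace ℝ E]
  [NormedAddCommGroup G] [NormedSpace ℝ G]

theorem norm_fderiv_add_sub_le_of_lipschitzWith {F : E → G} {M : ℝ≥0} (hF : ContDiff ℝ 2 F)
    (hM : LipschitzWith M (fderiv ℝ (fderiv ℝ F))) (x y : E) :
    ‖fderiv ℝ F (x + y) - fderiv ℝ F x - fderiv ℝ (fderiv ℝ F) x y‖ ≤ M * ‖y‖ ^ 2 := by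
  have hF' : Differentiable ℝ (fderiv ℝ F) :=
    (hF.fderiv_right (m := 1) le_rfl).differentiable one_ne_zero
  have h := (convex_closedBall x ‖y‖).norm_image_sub_le_of_norm_fderiv_le'
    (f := fderiv ℝ F) (φ := fderiv ℝ (fderiv ℝ F) x) (C := M * ‖y‖) (x := x) (y := x + y)
    (fun z _ ↦ hF' z)
    (fun z hz ↦ (hM.norm_sub_le z x).trans (by gcongr; exact mem_closedBall_iff_norm.1 hz))
    (by simp) (by simp)
  simpa [pow_two, mul_assoc] using h

theorem norm_add_sub_taylor_two_le_of_lipschitzWith {F : E → G} {M : ℝ≥0} (hF : ContDiff ℝ 2 F)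
    (hM : LipschitzWith M (fderiv ℝ (fderiv ℝ F))) (x y : E) :
    ‖F (x + y) - F x - fderiv ℝ F x y - (1 / 2 : ℝ) • fderiv ℝ (fderiv ℝ F) x y y‖
      ≤ M * ‖y‖ ^ 3 := by
  set D := fderiv ℝ F
  set H := fderiv ℝ D x
  have hderiv (s : ℝ) : HasDerivAt
      (fun s : ℝ ↦ F (x + s • y) - s • D x y - (s ^ 2 / 2) • H y y)
      ((D (x + s • y) - D x - H (s • y)) y) s := by
    have hline : HasDerivAt (fun s : ℝ ↦ x + s • y) y s := by
      simpa using ((hasDerivAt_id s).smul_const y).const_add x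
    have hcomp := ((hF.differentiable two_ne_zero) (x + s • y)).hasFDerivAt.comp_hasDerivAt s hline
    have hlin := (hasDerivAt_id s).smul_const (D x y)
    have hquad := (((hasDerivAt_id s).fun_pow 2).div_const 2).smul_const (H y y)
    refine ((hcomp.fun_sub hlin).fun_sub hquad).congr_deriv ?_
    simp [D]
  have hbound (s : ℝ) (hs : s ∈ Set.Ico (0 : ℝ) 1) :
      ‖(D (x + s • y) - D x - H (s • y)) y‖ ≤ M * ‖y‖ ^ 3 := by
    have hsy : ‖s • y‖ ≤ ‖y‖ := by
      rw [norm_smul, Real.norm_of_nonneg hs.1]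
      exact mul_le_of_le_one_left (norm_nonneg y) hs.2.le
    calc ‖(D (x + s • y) - D x - H (s • y)) y‖
        ≤ ‖D (x + s • y) - D x - H (s • y)‖ * ‖y‖ := ContinuousLinearMap.le_opNorm _ _
      _ ≤ M * ‖s • y‖ ^ 2 * ‖y‖ := by
          gcongr; exact norm_fderiv_add_sub_le_of_lipschitzWith hF hM x (s • y)
      _ ≤ M * ‖y‖ ^ 2 * ‖y‖ := by gcongr
      _ = M * ‖y‖ ^ 3 := by ring
  have h := norm_image_sub_le_of_norm_deriv_le_segment_01'
    (fun s _ ↦ (hderiv s).hasDerivWithinAt) hbound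
  convert h using 2
  simp only [one_smul, zero_smul, add_zero, one_pow, ne_eq, OfNat.ofNat_ne_zero,
    not_false_eq_true, zero_pow, zero_div, sub_zero]
  abel

theorem fderiv_fderiv_apply_nonneg_of_supermodular {F : E → ℝ} (hF : ContDiff ℝ 2 F) {u v : E}
    (hsuper : ∀ (x : E) (s t : ℝ), 0 ≤ s → 0 ≤ t →
      F (x + s • u) + F (x + t • v) ≤ F x + F (x + s • u + t • v)) (x : E) :
    0 ≤ fderiv ℝ (fderiv ℝ F) x u v := by
  have hline (x w : E) (t : ℝ) : HasDerivAt (fun t : ℝ ↦ x + t • w) w t := by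
    simpa using ((hasDerivAt_id t).smul_const w).const_add x
  have hderiv (x w : E) : HasDerivAt (fun t : ℝ ↦ F (x + t • w)) (fderiv ℝ F x w) 0 := by
    have hFx : HasFDerivAt F (fderiv ℝ F x) (x + (0 : ℝ) • w) := by
      simpa using (hF.differentiable two_ne_zero x).hasFDerivAt
    exact hFx.comp_hasDerivAt 0 (hline x w 0)
  have hslope (x : E) (s : ℝ) (hs : 0 ≤ s) : fderiv ℝ F x v ≤ fderiv ℝ F (x + s • u) v := by
    have hmono : Monotone fun t : ℝ ↦ F (x + s • u + t • v) - F (x + t • v) := fun t₁ t₂ ht ↦ by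
      have h := hsuper (x + t₁ • v) s (t₂ - t₁) hs (sub_nonneg.2 ht)
      have e₁ : x + t₁ • v + s • u = x + s • u + t₁ • v := by abel
      have e₂ : x + t₁ • v + (t₂ - t₁) • v = x + t₂ • v := by module
      have e₃ : x + t₁ • v + s • u + (t₂ - t₁) • v = x + s • u + t₂ • v := by module
      rw [e₃, e₁, e₂] at h
      linarith
    exact sub_nonneg.1 <| ((hderiv (x + s • u) v).fun_sub (hderiv x v)).nonneg_of_monotone hmono
  have hmono : Monotone fun s : ℝ ↦ fderiv ℝ F (x + s • u) v := fun s₁ s₂ hs ↦ by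
    have e : x + s₁ • u + (s₂ - s₁) • u = x + s₂ • u := by module
    simpa only [e] using hslope (x + s₁ • u) (s₂ - s₁) (sub_nonneg.2 hs)
  have hD : HasFDerivAt (fderiv ℝ F) (fderiv ℝ (fderiv ℝ F) x) (x + (0 : ℝ) • u) := by
    simpa using ((hF.fderiv_right (m := 1) le_rfl).differentiable one_ne_zero x).hasFDerivAt
  have hDv : HasDerivAt (fun s : ℝ ↦ fderiv ℝ F (x + s • u) v) (fderiv ℝ (fderiv ℝ F) x u v) 0 :=
    (ContinuousLinearMap.apply ℝ ℝ v).hasFDerivAt.comp_hasDerivAt 0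
      (hD.comp_hasDerivAt 0 (hline x u 0))
  exact hDv.nonneg_of_monotone hmono

theorem lipschitzWith_fderiv_of_norm_iteratedFDeriv_le {F : E → G} {M : ℝ≥0}
    (hF : ContDiff ℝ 2 F) (hM : ∀ x, ‖iteratedFDeriv ℝ 2 F x‖ ≤ M) :
    LipschitzWith M (fderiv ℝ F) := by
  have hF' : ContDiff ℝ 1 (fderiv ℝ F) := hF.fderiv_right le_rfl
  refine lipschitzWith_of_nnnorm_fderiv_le (hF'.differentiable one_ne_zero) fun x ↦ ?_
  rw [← NNReal.coe_le_coe, coe_nnnorm, ← norm_iteratedFDeriv_zero (𝕜 := ℝ)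
    (f := fderiv ℝ (fderiv ℝ F)), norm_iteratedFDeriv_fderiv, norm_iteratedFDeriv_fderiv]
  exact hM x

end Calculus

theorem monotoneOn_of_le_add_const_mul_rpow {φ : ℝ → ℝ} {s : Set ℝ} [s.OrdConnected] {C r : ℝ}
    (hr : 1 < r) (h : ∀ x ∈ s, ∀ y ∈ s, x ≤ y → φ x ≤ φ y + C * (y - x) ^ r) :
    MonotoneOn φ s := by
  intro x hx y hy hxy
  have hsteps (n : ℕ) (d : ℝ) (hd : 0 ≤ d) (hn : x + n * d ≤ y) :
      φ x ≤ φ (x + n * d) + n * (C * d ^ r) := by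
    induction n with
    | zero => simp
    | succ n ih =>
      push_cast at hn ⊢
      have hmem (c : ℝ) (h₀ : 0 ≤ c) (h₁ : x + c ≤ y) : x + c ∈ s :=
        Set.Icc_subset s hx hy ⟨by linarith, h₁⟩
      have hstep := h (x + n * d) (hmem _ (by positivity) (by linarith))
        (x + (n + 1) * d) (hmem _ (by positivity) hn) (by linarith)
      rw [show x + (n + 1) * d - (x + n * d) = d by ring] at hstep
      linarith [ih (by linarith)]
  have hbound : ∀ᶠ n : ℕ in Filter.atTop,
      φ x ≤ φ y + C * (y - x) ^ r * (n : ℝ) ^ (-(r - 1)) := by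
    filter_upwards [Filter.eventually_gt_atTop 0] with n hn
    have hn' : (0 : ℝ) < n := by exact_mod_cast hn
    have hxy' : x + n * ((y - x) / n) = y := by field_simp; ring
    convert hsteps n ((y - x) / n) (div_nonneg (sub_nonneg.2 hxy) hn'.le) hxy'.le using 2
    · rw [hxy']
    · rw [Real.div_rpow (sub_nonneg.2 hxy) hn'.le, neg_sub, Real.rpow_sub hn', Real.rpow_one]
      ring
  have hlim : Filter.Tendsto (fun n : ℕ ↦ φ y + C * (y - x) ^ r * (n : ℝ) ^ (-(r - 1)))
      Filter.atTop (𝓝 (φ y + C * (y - x) ^ r * 0)) :=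
    (((tendsto_rpow_neg_atTop (sub_pos.2 hr)).comp tendsto_natCast_atTop_atTop).const_mul
      _).const_add _
  simpa using ge_of_tendsto hlim hbound

section GaussianComparison

variable {E : Type*} [NormedAddCommGroup E] [NormedSpace ℝ E] [MeasurableSpace E] [BorelSpace E]
  [SecondCountableTopology E] {F : E → ℝ} {M : ℝ≥0}

theorem integrable_apply_apply_self {ν : Measure E} (hν : MemLp id 2 ν) (B : E →L[ℝ] E →L[ℝ] ℝ) :
    Integrable (fun y ↦ B y y) ν := by
  refine ((hν.integrable_norm_pow two_ne_zero).const_mul ‖B‖).mono'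
    (by fun_prop) (.of_forall fun y ↦ ?_)
  simpa [pow_two, mul_assoc] using B.le_opNorm₂ y y

theorem integrable_comp_add_of_lipschitzWith_fderiv_fderiv {ν : Measure E} [IsFiniteMeasure ν]
    (hν : MemLp id 3 ν) (hF : ContDiff ℝ 2 F) (hM : LipschitzWith M (fderiv ℝ (fderiv ℝ F)))
    (x : E) : Integrable (fun y ↦ F (x + y)) ν := by
  have hcont := hF.continuous
  have hlin : Integrable (fun y ↦ fderiv ℝ F x y) ν :=
    (fderiv ℝ F x).integrable_comp (hν.integrable (by norm_num))
  have hquad := (integrable_apply_apply_self (hν.mono_exponent (by norm_num))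
    (fderiv ℝ (fderiv ℝ F) x)).const_mul (1 / 2)
  have hrem : Integrable (fun y ↦ F (x + y) - F x - fderiv ℝ F x y
      - 1 / 2 * fderiv ℝ (fderiv ℝ F) x y y) ν :=
    ((hν.integrable_norm_pow three_ne_zero).const_mul M).mono' (by fun_prop)
      (.of_forall (norm_add_sub_taylor_two_le_of_lipschitzWith hF hM x))
  refine (((hrem.add hquad).add hlin).add (integrable_const (F x))).congr (.of_forall fun y ↦ ?_)
  simp only [Pi.add_apply]
  ring

theorem abs_integral_comp_add_sub_le_of_lipschitzWith_fderiv_fderiv [CompleteSpace E]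
    {ν : Measure E} [IsProbabilityMeasure ν] (hν : MemLp id 3 ν) (hν₀ : ν[id] = 0)
    (hF : ContDiff ℝ 2 F) (hM : LipschitzWith M (fderiv ℝ (fderiv ℝ F))) (x : E) :
    |∫ y, F (x + y) ∂ν - (F x + 1 / 2 * ∫ y, fderiv ℝ (fderiv ℝ F) x y y ∂ν)|
      ≤ M * ∫ y, ‖y‖ ^ 3 ∂ν := by
  have hint := integrable_comp_add_of_lipschitzWith_fderiv_fderiv hν hF hM x
  have hid : Integrable id ν := hν.integrable (by norm_num)
  have hlin : Integrable (fun y ↦ fderiv ℝ F x y) ν := (fderiv ℝ F x).integrable_comp hid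
  have hquad := (integrable_apply_apply_self (hν.mono_exponent (by norm_num))
    (fderiv ℝ (fderiv ℝ F) x)).const_mul (1 / 2)
  have hmean : ∫ y, fderiv ℝ F x y ∂ν = 0 := by
    rw [← map_zero (fderiv ℝ F x), ← hν₀]
    exact (fderiv ℝ F x).integral_comp_comm hid
  have hsplit : ∫ y, F (x + y) ∂ν - (F x + 1 / 2 * ∫ y, fderiv ℝ (fderiv ℝ F) x y y ∂ν)
      = ∫ y, (F (x + y) - F x - fderiv ℝ F x y - 1 / 2 * fderiv ℝ (fderiv ℝ F) x y y) ∂ν := by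
    have hconst : Integrable (fun y ↦ F (x + y) - F x) ν := hint.sub (integrable_const _)
    have hconstlin : Integrable (fun y ↦ F (x + y) - F x - fderiv ℝ F x y) ν := hconst.sub hlin
    rw [integral_sub hconstlin hquad, integral_sub hconst hlin,
      integral_sub hint (integrable_const _), hmean, integral_const_mul, integral_const,
      probReal_univ, one_smul]
    ring
  rw [hsplit, ← integral_const_mul, ← Real.norm_eq_abs]
  exact norm_integral_le_of_norm_le ((hν.integrable_norm_pow three_ne_zero).const_mul M)
    (.of_forall (norm_add_sub_taylor_two_le_of_lipschitzWith hF hM x))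

theorem integral_conv_le_integral_conv_add [CompleteSpace E] {m ν ν' : Measure E}
    [IsGaussian m] [IsGaussian ν] [IsGaussian ν'] (hν : ν[id] = 0) (hν' : ν'[id] = 0)
    (hF : ContDiff ℝ 2 F) (hM : LipschitzWith M (fderiv ℝ (fderiv ℝ F)))
    (hle : ∀ x, ∫ y, fderiv ℝ (fderiv ℝ F) x y y ∂ν ≤ ∫ y, fderiv ℝ (fderiv ℝ F) x y y ∂ν') :
    ∫ x, F x ∂(m ∗ ν) ≤ ∫ x, F x ∂(m ∗ ν') + M * (∫ y, ‖y‖ ^ 3 ∂ν + ∫ y, ‖y‖ ^ 3 ∂ν') := by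
  have hint (κ : Measure E) [IsGaussian κ] : Integrable F (m ∗ κ) := by
    simpa using integrable_comp_add_of_lipschitzWith_fderiv_fderiv
      (IsGaussian.memLp_id (m ∗ κ) 3 (by simp)) hF hM 0
  have hinner (κ : Measure E) [IsGaussian κ] : Integrable (fun x ↦ ∫ y, F (x + y) ∂κ) m :=
    ((hint κ).comp_measurable measurable_add).integral_prod_left
  rw [integral_conv (hint ν), integral_conv (hint ν')]
  calc ∫ x, ∫ y, F (x + y) ∂ν ∂m
      ≤ ∫ x, ((∫ y, F (x + y) ∂ν') + M * (∫ y, ‖y‖ ^ 3 ∂ν + ∫ y, ‖y‖ ^ 3 ∂ν')) ∂m := by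
        refine integral_mono (hinner ν) ((hinner ν').add (integrable_const _)) fun x ↦ ?_
        have h := abs_le.1 <| abs_integral_comp_add_sub_le_of_lipschitzWith_fderiv_fderiv
          (IsGaussian.memLp_id ν 3 (by simp)) hν hF hM x
        have h' := abs_le.1 <| abs_integral_comp_add_sub_le_of_lipschitzWith_fderiv_fderiv
          (IsGaussian.memLp_id ν' 3 (by simp)) hν' hF hM x
        linarith [hle x]
    _ = ∫ x, ∫ y, F (x + y) ∂ν' ∂m + M * (∫ y, ‖y‖ ^ 3 ∂ν + ∫ y, ‖y‖ ^ 3 ∂ν') := by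
        rw [integral_add (hinner ν') (integrable_const _)]
        simp

end GaussianComparison

section SqrtScale

variable {E : Type*} [NormedAddCommGroup E] [NormedSpace ℝ E] [MeasurableSpace E]

/-- The law of `√a • Y`, where `Y` has law `ν`; its covariance is `a` times that of `ν`. For
`a < 0` this is the law of `0`, as `√a = 0`. -/
noncomputable def sqrtScale (a : ℝ) (ν : Measure E) : Measure E :=
  ν.map fun y ↦ √a • y

theorem sqrtScale_zero (ν : Measure E) [IsProbabilityMeasure ν] : sqrtScale 0 ν = dirac 0 := by
  simp [sqrtScale]

theorem sqrtScale_one (ν : Measure E) : sqrtScale 1 ν = ν := by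
  simp [sqrtScale]

variable [BorelSpace E]

instance isGaussian_sqrtScale (a : ℝ) (ν : Measure E) [IsGaussian ν] :
    IsGaussian (sqrtScale a ν) :=
  isGaussian_map (√a • ContinuousLinearMap.id ℝ E)

theorem integral_norm_pow_three_sqrtScale (ν : Measure E) {a : ℝ} (ha : 0 ≤ a) :
    ∫ y, ‖y‖ ^ 3 ∂(sqrtScale a ν) = a ^ (3 / 2 : ℝ) * ∫ y, ‖y‖ ^ 3 ∂ν := by
  have hpow : a ^ (3 / 2 : ℝ) = √a ^ 3 := by
    rw [Real.sqrt_eq_rpow, ← Real.rpow_mul_natCast ha]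
    norm_num
  rw [sqrtScale, integral_map (by fun_prop) (by fun_prop), ← integral_const_mul]
  simp [norm_smul, mul_pow, abs_of_nonneg, hpow]

variable [SecondCountableTopology E]

theorem integral_id_sqrtScale {ν : Measure E} (hν : ν[id] = 0) (a : ℝ) :
    (sqrtScale a ν)[id] = 0 := by
  rw [sqrtScale, integral_map (by fun_prop) (by fun_prop)]
  exact (integral_smul (√a) id).trans (by rw [hν, smul_zero])

theorem integral_apply_apply_self_sqrtScale (B : E →L[ℝ] E →L[ℝ] ℝ) (ν : Measure E) {a : ℝ}
    (ha : 0 ≤ a) : ∫ y, B y y ∂(sqrtScale a ν) = a * ∫ y, B y y ∂ν := by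
  rw [sqrtScale, integral_map (by fun_prop) (by fun_prop), ← integral_const_mul]
  simp [← mul_assoc, Real.mul_self_sqrt ha]

variable [CompleteSpace E]

theorem charFunDual_sqrtScale {ν : Measure E} [IsGaussian ν] (hν : ν[id] = 0) {a : ℝ} (ha : 0 ≤ a)
    (L : StrongDual ℝ E) :
    charFunDual (sqrtScale a ν) L = Complex.exp (-(a * Var[L; ν]) / 2) := by
  have hL : L.comp (√a • ContinuousLinearMap.id ℝ E) = √a • L := by ext; simp
  have hvar : Var[(√a • L : StrongDual ℝ E); ν] = a * Var[L; ν] := by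
    simpa [Real.sq_sqrt ha] using variance_smul (√a) L ν
  have hmap : sqrtScale a ν = ν.map (√a • ContinuousLinearMap.id ℝ E) := rfl
  rw [hmap, charFunDual_map, hL, IsGaussian.charFunDual_eq_of_integral_eq_zero hν, hvar]
  push_cast
  rfl

theorem sqrtScale_add {ν : Measure E} [IsGaussian ν] (hν : ν[id] = 0) {a b : ℝ} (ha : 0 ≤ a)
    (hb : 0 ≤ b) : sqrtScale (a + b) ν = sqrtScale a ν ∗ sqrtScale b ν := by
  refine ext_of_charFunDual (funext fun L ↦ ?_)
  rw [charFunDual_conv, charFunDual_sqrtScale hν (add_nonneg ha hb), charFunDual_sqrtScale hν ha,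
    charFunDual_sqrtScale hν hb, ← Complex.exp_add]
  push_cast
  ring_nf

end SqrtScale

section GaussianInterpolation

variable {E : Type*} [NormedAddCommGroup E] [NormedSpace ℝ E] [MeasurableSpace E]

/-- The law of `√(1 - t) • Y + √t • Y'` for independent `Y` and `Y'` with laws `ν` and `ν'`: a
path from `ν` to `ν'`, along which covariances interpolate linearly. -/
noncomputable def gaussianInterpolation (ν ν' : Measure E) (t : ℝ) : Measure E :=
  sqrtScale (1 - t) ν ∗ sqrtScale t ν'

variable [BorelSpace E] [SecondCountableTopology E]

theorem gaussianInterpolation_zero (ν ν' : Measure E) [IsProbabilityMeasure ν]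
    [IsProbabilityMeasure ν'] : gaussianInterpolation ν ν' 0 = ν := by
  rw [gaussianInterpolation, sub_zero, sqrtScale_one, sqrtScale_zero, conv_dirac_zero]

theorem gaussianInterpolation_one (ν ν' : Measure E) [IsProbabilityMeasure ν]
    [IsProbabilityMeasure ν'] : gaussianInterpolation ν ν' 1 = ν' := by
  rw [gaussianInterpolation, sub_self, sqrtScale_one, sqrtScale_zero, dirac_zero_conv]

variable [CompleteSpace E] {F : E → ℝ} {M : ℝ≥0}

theorem integral_gaussianInterpolation_le_add {ν ν' : Measure E} [IsGaussian ν] [IsGaussian ν']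
    (hν : ν[id] = 0) (hν' : ν'[id] = 0) (hF : ContDiff ℝ 2 F)
    (hM : LipschitzWith M (fderiv ℝ (fderiv ℝ F)))
    (hle : ∀ x, ∫ y, fderiv ℝ (fderiv ℝ F) x y y ∂ν ≤ ∫ y, fderiv ℝ (fderiv ℝ F) x y y ∂ν')
    {s t : ℝ} (hs : 0 ≤ s) (hst : s ≤ t) (ht : t ≤ 1) :
    ∫ x, F x ∂(gaussianInterpolation ν ν' s) ≤ ∫ x, F x ∂(gaussianInterpolation ν ν' t)
      + M * (∫ y, ‖y‖ ^ 3 ∂ν + ∫ y, ‖y‖ ^ 3 ∂ν') * (t - s) ^ (3 / 2 : ℝ) := by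
  have hts : 0 ≤ t - s := sub_nonneg.2 hst
  -- The two interpolants differ only in one summand of covariance proportional to `t - s`.
  have hleft : gaussianInterpolation ν ν' s
      = (sqrtScale (1 - t) ν ∗ sqrtScale s ν') ∗ sqrtScale (t - s) ν := by
    rw [gaussianInterpolation, ← sub_add_sub_cancel 1 t s, sqrtScale_add hν (sub_nonneg.2 ht) hts,
      conv_assoc, conv_assoc, conv_comm (sqrtScale (t - s) ν)]
  have hright : gaussianInterpolation ν ν' t
      = (sqrtScale (1 - t) ν ∗ sqrtScale s ν') ∗ sqrtScale (t - s) ν' := by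
    rw [gaussianInterpolation, conv_assoc, ← sqrtScale_add hν' hs hts, add_sub_cancel]
  rw [hleft, hright]
  refine (integral_conv_le_integral_conv_add (integral_id_sqrtScale hν (t - s))
    (integral_id_sqrtScale hν' (t - s)) hF hM fun x ↦ ?_).trans_eq ?_
  · rw [integral_apply_apply_self_sqrtScale _ ν hts, integral_apply_apply_self_sqrtScale _ ν' hts]
    exact mul_le_mul_of_nonneg_left (hle x) hts
  · rw [integral_norm_pow_three_sqrtScale ν hts, integral_norm_pow_three_sqrtScale ν' hts]
    ring

theorem integral_le_integral_of_integral_fderiv_fderiv_le {ν ν' : Measure E} [IsGaussian ν]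
    [IsGaussian ν'] (hν : ν[id] = 0) (hν' : ν'[id] = 0) (hF : ContDiff ℝ 2 F)
    (hM : LipschitzWith M (fderiv ℝ (fderiv ℝ F)))
    (hle : ∀ x, ∫ y, fderiv ℝ (fderiv ℝ F) x y y ∂ν ≤ ∫ y, fderiv ℝ (fderiv ℝ F) x y y ∂ν') :
    ∫ x, F x ∂ν ≤ ∫ x, F x ∂ν' := by
  have hmono : MonotoneOn (fun t ↦ ∫ x, F x ∂(gaussianInterpolation ν ν' t)) (Set.Icc 0 1) :=
    monotoneOn_of_le_add_const_mul_rpow (by norm_num) fun s hs t ht hst ↦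
      integral_gaussianInterpolation_le_add hν hν' hF hM hle hs.1 hst ht.2
  simpa [gaussianInterpolation_zero, gaussianInterpolation_one]
    using hmono (by simp) (by simp) zero_le_one

end GaussianInterpolation

theorem tendsto_measureReal_Iic_add_nhdsGT_zero {ι : Type*} [Countable ι] (μ : Measure (ι → ℝ))
    [IsFiniteMeasure μ] (u : ι → ℝ) :
    Filter.Tendsto (fun η ↦ μ.real (Set.Iic fun i ↦ u i + η)) (𝓝[>] 0)
      (𝓝 (μ.real (Set.Iic u))) := by
  have hInter : ⋂ η > (0 : ℝ), Set.Iic (fun i ↦ u i + η) = Set.Iic u := by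
    ext y
    simp only [Set.mem_iInter, Set.mem_Iic, Pi.le_def]
    exact ⟨fun h i ↦ le_of_forall_pos_le_add fun η hη ↦ h η hη i,
      fun h η hη i ↦ (h i).trans (le_add_of_nonneg_right (le_of_lt hη))⟩
  rw [← hInter]
  refine (ENNReal.tendsto_toReal (measure_ne_top μ _)).comp
    (tendsto_measure_biInter_gt (fun _ _ ↦ measurableSet_Iic.nullMeasurableSet)
      (fun η η' _ hη ↦ Set.Iic_subset_Iic.2 fun i ↦ by gcongr) ⟨1, one_pos, measure_ne_top μ _⟩)

section Slepian

variable {ι : Type*} [Fintype ι]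

theorem integral_apply_apply_self_eq_sum [DecidableEq ι] {ν : Measure (ι → ℝ)} (hν : MemLp id 2 ν)
    (B : (ι → ℝ) →L[ℝ] (ι → ℝ) →L[ℝ] ℝ) :
    ∫ y, B y y ∂ν = ∑ i, ∑ j, (∫ y, y i * y j ∂ν) * B (Pi.single i 1) (Pi.single j 1) := by
  have hcoord (i : ι) : MemLp (fun y : ι → ℝ ↦ y i) 2 ν :=
    (ContinuousLinearMap.proj (R := ℝ) (φ := fun _ : ι ↦ ℝ) i).comp_memLp' hν
  have hint (i j : ι) :
      Integrable (fun y : ι → ℝ ↦ y i * y j * B (Pi.single i 1) (Pi.single j 1)) ν :=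
    ((hcoord i).integrable_mul (hcoord j)).mul_const _
  have hexpand (y : ι → ℝ) :
      B y y = ∑ i, ∑ j, y i * y j * B (Pi.single i 1) (Pi.single j 1) := by
    conv_lhs => rw [pi_eq_sum_univ' y]
    simp only [_root_.map_sum, _root_.map_smul, _root_.sum_apply, _root_.smul_apply,
      smul_eq_mul, Finset.mul_sum]
    rw [Finset.sum_comm]
    exact Finset.sum_congr rfl fun i _ ↦ Finset.sum_congr rfl fun j _ ↦ by ring
  simp_rw [hexpand]
  rw [integral_finsetSum _ fun i _ ↦ integrable_finsetSum _ fun j _ ↦ hint i j]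
  refine Finset.sum_congr rfl fun i _ ↦ ?_
  simp_rw [integral_finsetSum _ fun j _ ↦ hint i j, integral_mul_const]

theorem prod_add_prod_le_prod_add_prod_of_antitone [DecidableEq ι] {f : ι → ℝ → ℝ}
    (hf₀ : ∀ i x, 0 ≤ f i x) (hf : ∀ i, Antitone (f i)) {i j : ι} (hij : i ≠ j) (x : ι → ℝ)
    {s t : ℝ} (hs : 0 ≤ s) (ht : 0 ≤ t) :
    ∏ l, f l ((x + s • (Pi.single i 1 : ι → ℝ)) l) + ∏ l, f l ((x + t • (Pi.single j 1 : ι → ℝ)) l)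
      ≤ ∏ l, f l (x l)
        + ∏ l, f l ((x + s • (Pi.single i 1 : ι → ℝ) + t • (Pi.single j 1 : ι → ℝ)) l) := by
  have hsplit (y : ι → ℝ) (hy : ∀ l, l ≠ i → l ≠ j → y l = x l) : ∏ l, f l (y l)
      = f i (y i) * f j (y j) * ∏ l ∈ (univ.erase i).erase j, f l (x l) := by
    rw [← mul_prod_erase univ _ (mem_univ i),
      ← mul_prod_erase (univ.erase i) _ (mem_erase.2 ⟨hij.symm, mem_univ j⟩), mul_assoc]
    congr 2
    refine prod_congr rfl fun l hl ↦ ?_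
    rw [hy l (ne_of_mem_erase (mem_of_mem_erase hl)) (ne_of_mem_erase hl)]
  have hrest : 0 ≤ ∏ l ∈ (univ.erase i).erase j, f l (x l) := prod_nonneg fun l _ ↦ hf₀ l _
  have hi : f i (x i + s) ≤ f i (x i) := hf i (le_add_of_nonneg_right hs)
  have hj : f j (x j + t) ≤ f j (x j) := hf j (le_add_of_nonneg_right ht)
  rw [hsplit x (by simp), hsplit _ (by simp +contextual), hsplit _ (by simp +contextual),
    hsplit _ (by simp +contextual)]
  simp only [Pi.add_apply, Pi.smul_apply, Pi.single_eq_same, Pi.single_eq_of_ne hij,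
    Pi.single_eq_of_ne hij.symm, smul_eq_mul, mul_one, mul_zero, add_zero]
  nlinarith [mul_nonneg (mul_nonneg (sub_nonneg.2 hi) (sub_nonneg.2 hj)) hrest]

theorem exists_norm_iteratedFDeriv_prod_le {f : ι → ℝ → ℝ} {n : ℕ} (hf : ∀ i, ContDiff ℝ n (f i))
    (hbdd : ∀ i, ∀ m ≤ n, ∃ C, ∀ x, ‖iteratedFDeriv ℝ m (f i) x‖ ≤ C) :
    ∃ C : ℝ≥0, ∀ y, ‖iteratedFDeriv ℝ n (fun y : ι → ℝ ↦ ∏ i, f i (y i)) y‖ ≤ C := by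
  classical
  choose! C hC using hbdd
  have hC₀ (i : ι) (m : ℕ) (hm : m ≤ n) : 0 ≤ C i m := (norm_nonneg _).trans (hC i m hm 0)
  have hproj (i : ι) (m : ℕ) (hm : m ≤ n) (y : ι → ℝ) :
      ‖iteratedFDeriv ℝ m (fun y : ι → ℝ ↦ f i (y i)) y‖ ≤ C i m := by
    let π : (ι → ℝ) →L[ℝ] ℝ := ContinuousLinearMap.proj i
    have hπ : ‖π‖ ≤ 1 := π.opNorm_le_bound zero_le_one fun z ↦
      (norm_le_pi_norm z i).trans_eq (one_mul _).symm
    calc ‖iteratedFDeriv ℝ m (f i ∘ π) y‖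
      _ ≤ ‖iteratedFDeriv ℝ m (f i) (π y)‖ * ∏ _l : Fin m, ‖π‖ := by
          rw [π.iteratedFDeriv_comp_right (hf i) y (by exact_mod_cast hm)]
          exact ContinuousMultilinearMap.norm_compContinuousLinearMap_le _ _
      _ ≤ C i m * 1 := by
          gcongr
          · exact hC₀ i m hm
          · exact hC i m hm _
          · exact prod_le_one (fun _ _ ↦ norm_nonneg _) fun _ _ ↦ hπ
      _ = C i m := mul_one _
  have hcount (p : Sym ι n) (i : ι) : (p : Multiset ι).count i ≤ n :=
    ((p : Multiset ι).count_le_card i).trans_eq p.2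
  refine ⟨⟨∑ p ∈ univ.sym n, (p : Multiset ι).countPerms * ∏ i, C i ((p : Multiset ι).count i),
    sum_nonneg fun p _ ↦ mul_nonneg (by positivity)
      (prod_nonneg fun i _ ↦ hC₀ i _ (hcount p i))⟩, fun y ↦ ?_⟩
  refine (norm_iteratedFDeriv_prod_le (fun i _ ↦ (hf i).comp (contDiff_apply ℝ ℝ i))
    le_rfl).trans (sum_le_sum fun p _ ↦ ?_)
  gcongr with i
  exact hproj i _ (hcount p i) y

theorem integral_prod_le_integral_prod_of_antitone {μ ν : Measure (ι → ℝ)} [IsGaussian μ]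
    [IsGaussian ν] (hμ : μ[id] = 0) (hν : ν[id] = 0)
    (hdiag : ∀ i, ∫ y, y i * y i ∂μ = ∫ y, y i * y i ∂ν)
    (hoff : ∀ i j, i ≠ j → ∫ y, y i * y j ∂μ ≤ ∫ y, y i * y j ∂ν) {f : ι → ℝ → ℝ}
    (hf₀ : ∀ i x, 0 ≤ f i x) (hanti : ∀ i, Antitone (f i)) (hf : ∀ i, ContDiff ℝ 3 (f i))
    (hbdd : ∀ i, ∀ m ≤ 3, ∃ C, ∀ x, ‖iteratedFDeriv ℝ m (f i) x‖ ≤ C) :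
    ∫ y, ∏ i, f i (y i) ∂μ ≤ ∫ y, ∏ i, f i (y i) ∂ν := by
  classical
  have hF : ContDiff ℝ 3 fun y : ι → ℝ ↦ ∏ i, f i (y i) :=
    contDiff_prod fun i _ ↦ (hf i).comp (contDiff_apply ℝ ℝ i)
  have hF₂ := hF.of_le (show (2 : WithTop ℕ∞) ≤ 3 by norm_num)
  obtain ⟨C, hC⟩ := exists_norm_iteratedFDeriv_prod_le hf hbdd
  have hLip := lipschitzWith_fderiv_of_norm_iteratedFDeriv_le
    (hF.fderiv_right (m := 2) (by norm_num))
    fun y ↦ (norm_iteratedFDeriv_fderiv (𝕜 := ℝ)).trans_le (hC y)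
  refine integral_le_integral_of_integral_fderiv_fderiv_le hμ hν hF₂ hLip fun x ↦ ?_
  rw [integral_apply_apply_self_eq_sum (IsGaussian.memLp_id μ 2 (by simp)),
    integral_apply_apply_self_eq_sum (IsGaussian.memLp_id ν 2 (by simp))]
  refine sum_le_sum fun i _ ↦ sum_le_sum fun j _ ↦ ?_
  rcases eq_or_ne i j with rfl | hij
  · rw [hdiag]
  · refine mul_le_mul_of_nonneg_right (hoff i j hij) ?_
    exact fderiv_fderiv_apply_nonneg_of_supermodular hF₂ (fun x s t hs ht ↦
      prod_add_prod_le_prod_add_prod_of_antitone hf₀ hanti hij x hs ht) x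

/-- A smooth decreasing approximation of the indicator function of `Set.Iic u`, equal to `1` on
`Set.Iic u` and to `0` on `Set.Ici (u + η)` when `0 < η`. -/
noncomputable def smoothCutoff (u η x : ℝ) : ℝ := Real.smoothTransition ((u + η - x) / η)

theorem smoothCutoff_nonneg (u η x : ℝ) : 0 ≤ smoothCutoff u η x :=
  Real.smoothTransition.nonneg _

theorem smoothCutoff_le_one (u η x : ℝ) : smoothCutoff u η x ≤ 1 :=
  Real.smoothTransition.le_one _

theorem smoothCutoff_of_le {u η x : ℝ} (hη : 0 < η) (hx : x ≤ u) : smoothCutoff u η x = 1 :=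
  Real.smoothTransition.one_of_one_le <| by rw [le_div_iff₀ hη]; linarith

theorem smoothCutoff_of_ge {u η x : ℝ} (hη : 0 ≤ η) (hx : u + η ≤ x) : smoothCutoff u η x = 0 :=
  Real.smoothTransition.zero_of_nonpos <| div_nonpos_of_nonpos_of_nonneg (by linarith) hη

theorem antitone_smoothCutoff (u : ℝ) {η : ℝ} (hη : 0 ≤ η) : Antitone (smoothCutoff u η) :=
  fun x y hxy ↦ Real.smoothTransition.monotone (by gcongr)

theorem contDiff_smoothCutoff (u η : ℝ) {n : ℕ∞} : ContDiff ℝ n (smoothCutoff u η) :=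
  Real.smoothTransition.contDiff.comp (by fun_prop)

theorem hasCompactSupport_fderiv_smoothCutoff (u : ℝ) {η : ℝ} (hη : 0 < η) :
    HasCompactSupport (fderiv ℝ (smoothCutoff u η)) := by
  refine .intro (isCompact_Icc (a := u) (b := u + η)) fun x hx ↦ ?_
  rcases lt_or_ge x u with hxu | hux
  · have hone : smoothCutoff u η =ᶠ[𝓝 x] fun _ ↦ 1 := by
      filter_upwards [Iio_mem_nhds hxu] with y hy using smoothCutoff_of_le hη (le_of_lt hy)
    rw [hone.fderiv_eq, fderiv_const_apply]
  · have hzero : smoothCutoff u η =ᶠ[𝓝 x] fun _ ↦ 0 := by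
      filter_upwards [Ioi_mem_nhds (lt_of_not_ge fun h ↦ hx ⟨hux, h⟩)] with y hy
        using smoothCutoff_of_ge hη.le (le_of_lt hy)
    rw [hzero.fderiv_eq, fderiv_const_apply]

theorem exists_norm_iteratedFDeriv_smoothCutoff_le (u : ℝ) {η : ℝ} (hη : 0 < η) (n : ℕ) :
    ∃ C, ∀ x, ‖iteratedFDeriv ℝ n (smoothCutoff u η) x‖ ≤ C := by
  cases n with
  | zero =>
    refine ⟨1, fun x ↦ ?_⟩
    rw [norm_iteratedFDeriv_zero, Real.norm_of_nonneg (smoothCutoff_nonneg u η x)]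
    exact smoothCutoff_le_one u η x
  | succ n =>
    have hcont : Continuous (iteratedFDeriv ℝ n (fderiv ℝ (smoothCutoff u η))) :=
      ((contDiff_smoothCutoff u η (n := ⊤)).fderiv_right (m := n) (mod_cast le_top)
        ).continuous_iteratedFDeriv le_rfl
    obtain ⟨C, hC⟩ := ((hasCompactSupport_fderiv_smoothCutoff u hη).iteratedFDeriv (𝕜 := ℝ) n
      ).exists_bound_of_continuous hcont
    exact ⟨C, fun x ↦ norm_iteratedFDeriv_fderiv.symm.trans_le (hC x)⟩

theorem integrable_prod_smoothCutoff (μ : Measure (ι → ℝ)) [IsFiniteMeasure μ] (u : ι → ℝ) (η : ℝ) :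
    Integrable (fun y : ι → ℝ ↦ ∏ i, smoothCutoff (u i) η (y i)) μ := by
  refine .of_bound (C := 1) (Continuous.aestronglyMeasurable ?_) (.of_forall fun y ↦ ?_)
  · exact continuous_finsetProd _ fun i _ ↦
      (contDiff_smoothCutoff (u i) η (n := 0)).continuous.comp (continuous_apply i)
  · rw [Real.norm_of_nonneg (prod_nonneg fun i _ ↦ smoothCutoff_nonneg _ _ _)]
    exact prod_le_one (fun i _ ↦ smoothCutoff_nonneg _ _ _) fun i _ ↦ smoothCutoff_le_one _ _ _

theorem measureReal_Iic_le_integral_prod_smoothCutoff (μ : Measure (ι → ℝ)) [IsFiniteMeasure μ]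
    (u : ι → ℝ) {η : ℝ} (hη : 0 < η) :
    μ.real (Set.Iic u) ≤ ∫ y, ∏ i, smoothCutoff (u i) η (y i) ∂μ := by
  rw [← integral_indicator_one measurableSet_Iic]
  refine integral_mono ((integrable_const 1).indicator measurableSet_Iic)
    (integrable_prod_smoothCutoff μ u η) (Set.indicator_le' (fun y hy ↦ ?_) fun y _ ↦ ?_)
  · exact (prod_eq_one fun i _ ↦ smoothCutoff_of_le hη (hy i)).ge
  · exact prod_nonneg fun i _ ↦ smoothCutoff_nonneg _ _ _

theorem integral_prod_smoothCutoff_le_measureReal_Iic (μ : Measure (ι → ℝ)) [IsFiniteMeasure μ]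
    (u : ι → ℝ) {η : ℝ} (hη : 0 ≤ η) :
    ∫ y, ∏ i, smoothCutoff (u i) η (y i) ∂μ ≤ μ.real (Set.Iic fun i ↦ u i + η) := by
  rw [← integral_indicator_one measurableSet_Iic]
  refine integral_mono (integrable_prod_smoothCutoff μ u η)
    ((integrable_const 1).indicator measurableSet_Iic)
    (Set.le_indicator (fun y _ ↦ ?_) fun y hy ↦ ?_)
  · exact prod_le_one (fun i _ ↦ smoothCutoff_nonneg _ _ _) fun i _ ↦ smoothCutoff_le_one _ _ _
  · obtain ⟨i, hi⟩ := not_forall.1 hy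
    exact (prod_eq_zero (mem_univ i) (smoothCutoff_of_ge hη (le_of_not_ge hi))).le

/-- **Slepian's lemma**. -/
theorem measureReal_Iic_le_of_integral_mul_le {μ ν : Measure (ι → ℝ)} [IsGaussian μ]
    [IsGaussian ν] (hμ : μ[id] = 0) (hν : ν[id] = 0)
    (hdiag : ∀ i, ∫ y, y i * y i ∂μ = ∫ y, y i * y i ∂ν)
    (hoff : ∀ i j, i ≠ j → ∫ y, y i * y j ∂μ ≤ ∫ y, y i * y j ∂ν) (u : ι → ℝ) :
    μ.real (Set.Iic u) ≤ ν.real (Set.Iic u) := by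
  refine ge_of_tendsto (tendsto_measureReal_Iic_add_nhdsGT_zero ν u) ?_
  filter_upwards [self_mem_nhdsWithin] with η (hη : 0 < η)
  calc μ.real (Set.Iic u)
    _ ≤ ∫ y, ∏ i, smoothCutoff (u i) η (y i) ∂μ :=
        measureReal_Iic_le_integral_prod_smoothCutoff μ u hη
    _ ≤ ∫ y, ∏ i, smoothCutoff (u i) η (y i) ∂ν :=
        integral_prod_le_integral_prod_of_antitone hμ hν hdiag hoff
          (fun i ↦ smoothCutoff_nonneg (u i) η) (fun i ↦ antitone_smoothCutoff (u i) hη.le)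
          (fun i ↦ contDiff_smoothCutoff (u i) η (n := 3))
          fun i m _ ↦ exists_norm_iteratedFDeriv_smoothCutoff_le (u i) hη m
    _ ≤ ν.real (Set.Iic fun i ↦ u i + η) := integral_prod_smoothCutoff_le_measureReal_Iic ν u hη.le

end Slepian

section Equicorrelated

variable {ι : Type*}

variable (ι) in
/-- The linear map sending `z` to `i ↦ √ε z₀ + √(1 - ε) zᵢ`, where the shared coordinate `z₀` is the
one at `none`. -/
noncomputable def equicorrelatedMap (ε : ℝ) : (Option ι → ℝ) →L[ℝ] (ι → ℝ) :=
  .pi fun i ↦ √ε • .proj none + √(1 - ε) • .proj (some i)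

theorem equicorrelatedMap_apply (ε : ℝ) (z : Option ι → ℝ) (i : ι) :
    equicorrelatedMap ι ε z i = √ε * z none + √(1 - ε) * z (some i) := by
  simp [equicorrelatedMap]

variable [Fintype ι]

theorem integral_id_eq_zero_of_integral_eval_eq_zero {ν : Measure (ι → ℝ)} (hν : Integrable id ν)
    (h : ∀ i, ∫ y, y i ∂ν = 0) : ν[id] = 0 := by
  ext i
  exact ((ContinuousLinearMap.proj (R := ℝ) (φ := fun _ : ι ↦ ℝ) i).integral_comp_comm
    hν).symm.trans (h i)

instance isGaussian_pi_gaussianReal_zero_one :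
    IsGaussian (Measure.pi fun _ : ι ↦ gaussianReal 0 1) := by
  have hmap : (Measure.pi fun _ : ι ↦ gaussianReal 0 1).map
      (PiLp.continuousLinearEquiv 2 ℝ fun _ : ι ↦ ℝ).symm = stdGaussian (EuclideanSpace ℝ ι) :=
    map_pi_eq_stdGaussian
  rw [← isGaussian_map_equiv_iff (PiLp.continuousLinearEquiv 2 ℝ fun _ : ι ↦ ℝ).symm, hmap]
  infer_instance

theorem integral_eval_pi_gaussianReal (i : ι) :
    ∫ z, z i ∂(Measure.pi fun _ : ι ↦ gaussianReal 0 1) = 0 :=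
  (integral_comp_eval (μ := fun _ : ι ↦ gaussianReal 0 1) (f := fun x : ℝ ↦ x)
    (by fun_prop)).trans integral_id_gaussianReal

theorem integral_eval_mul_eval_pi_gaussianReal [DecidableEq ι] (i j : ι) :
    ∫ z, z i * z j ∂(Measure.pi fun _ : ι ↦ gaussianReal 0 1) = if i = j then 1 else 0 := by
  split_ifs with hij
  · subst hij
    rw [integral_comp_eval (μ := fun _ : ι ↦ gaussianReal 0 1) (f := fun x : ℝ ↦ x * x)
      (by fun_prop)]
    have hvar := variance_fun_id_gaussianReal (μ := 0) (v := 1)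
    rw [variance_of_integral_eq_zero (by fun_prop) integral_id_gaussianReal] at hvar
    simpa [pow_two] using hvar
  · have hindep := (iIndepFun_pi (μ := fun _ : ι ↦ gaussianReal 0 1) (X := fun _ x ↦ x)
      fun _ ↦ by fun_prop).indepFun hij
    rw [hindep.integral_fun_mul_eq_mul_integral (measurable_pi_apply i).aestronglyMeasurable
      (measurable_pi_apply j).aestronglyMeasurable, integral_eval_pi_gaussianReal, zero_mul]

variable (ι) in
/-- The centered Gaussian measure on `ι → ℝ` whose coordinates have variance `1` and pairwise
covariance `ε` (for `0 ≤ ε ≤ 1`), constructed as the law of `√ε W + √(1 - ε) Zᵢ` with `W` and the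
`Zᵢ` independent standard Gaussian variables. -/
noncomputable def equicorrelatedGaussian (ε : ℝ) : Measure (ι → ℝ) :=
  (Measure.pi fun _ : Option ι ↦ gaussianReal 0 1).map (equicorrelatedMap ι ε)

instance isGaussian_equicorrelatedGaussian (ε : ℝ) : IsGaussian (equicorrelatedGaussian ι ε) :=
  inferInstanceAs (IsGaussian (Measure.map _ _))

theorem integral_id_equicorrelatedGaussian (ε : ℝ) : (equicorrelatedGaussian ι ε)[id] = 0 := by
  have hpi : (Measure.pi fun _ : Option ι ↦ gaussianReal 0 1)[id] = 0 :=
    integral_id_eq_zero_of_integral_eval_eq_zero IsGaussian.integrable_id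
      integral_eval_pi_gaussianReal
  rw [equicorrelatedGaussian, integral_map (by fun_prop) (by fun_prop)]
  exact ((equicorrelatedMap ι ε).integral_comp_comm IsGaussian.integrable_id).trans
    (by rw [hpi, map_zero])

theorem integral_eval_mul_eval_equicorrelatedGaussian [DecidableEq ι] {ε : ℝ} (hε₀ : 0 ≤ ε)
    (hε₁ : ε ≤ 1) (i j : ι) :
    ∫ y, y i * y j ∂equicorrelatedGaussian ι ε = if i = j then 1 else ε := by
  let ℓ (i : ι) : (Option ι → ℝ) →L[ℝ] ℝ := .proj i ∘L equicorrelatedMap ι ε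
  have hB (z z' : Option ι → ℝ) : (ℓ i).smulRight (ℓ j) z z'
      = (√ε * z none + √(1 - ε) * z (some i)) * (√ε * z' none + √(1 - ε) * z' (some j)) := by
    simp [ℓ, equicorrelatedMap_apply]
  rw [equicorrelatedGaussian, integral_map (by fun_prop)
    (Continuous.aestronglyMeasurable (by fun_prop))]
  simp_rw [equicorrelatedMap_apply, ← hB]
  rw [integral_apply_apply_self_eq_sum (IsGaussian.memLp_id _ 2 (by simp))]
  simp_rw [integral_eval_mul_eval_pi_gaussianReal, hB]
  split_ifs with hij
  · simp [Fintype.sum_option, Pi.single_apply, hij, Real.mul_self_sqrt, hε₀, hε₁]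
  · simp [Fintype.sum_option, Pi.single_apply, hij, Real.mul_self_sqrt hε₀]

theorem measureReal_Iic_equicorrelatedGaussian_le {ε u t v : ℝ} (hε : ε < 1)
    (huv : u + √ε * t ≤ √(1 - ε) * v) :
    (equicorrelatedGaussian ι ε).real (Set.Iic fun _ ↦ u)
      ≤ (gaussianReal 0 1).real (Set.Iic (-t))
        + (gaussianReal 0 1).real (Set.Iic v) ^ Fintype.card ι := by
  have hcover : equicorrelatedMap ι ε ⁻¹' (Set.Iic fun _ ↦ u)
      ⊆ {z | z none ≤ -t} ∪ {z | ∀ i, z (some i) ≤ v} := by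
    intro z hz
    rcases le_or_gt (z none) (-t) with hle | hgt
    · exact .inl hle
    · refine .inr fun i ↦ le_of_mul_le_mul_left ?_ (Real.sqrt_pos.2 (sub_pos.2 hε))
      have hzi : √ε * z none + √(1 - ε) * z (some i) ≤ u :=
        (equicorrelatedMap_apply ε z i).symm.trans_le (hz i)
      have hshared := mul_le_mul_of_nonneg_left hgt.le (Real.sqrt_nonneg ε)
      linarith
  rw [equicorrelatedGaussian, map_measureReal_apply (by fun_prop) measurableSet_Iic]
  refine (measureReal_mono hcover).trans ((measureReal_union_le _ _).trans_eq ?_)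
  congr 1
  · exact (measurePreserving_eval (fun _ : Option ι ↦ gaussianReal 0 1) none
      ).measureReal_preimage measurableSet_Iic.nullMeasurableSet
  · have hbox : {z : Option ι → ℝ | ∀ i, z (some i) ≤ v}
        = Set.univ.pi fun o ↦ o.elim Set.univ fun _ ↦ Set.Iic v := by
      ext z
      simp [Option.forall]
    rw [hbox, measureReal_def, pi_pi, Fintype.prod_option]
    simp [measureReal_def]

end Equicorrelated

section GaussianTail

theorem measureReal_Iic_neg_gaussianReal_le {t : ℝ} (ht : 0 ≤ t) :
    (gaussianReal 0 1).real (Set.Iic (-t)) ≤ Real.exp (-(t ^ 2 / 2)) := by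
  have hchernoff := measure_le_le_exp_mul_mgf (μ := gaussianReal 0 1) (X := id) (t := -t) (-t)
    (neg_nonpos.2 ht) (integrable_exp_mul_gaussianReal (-t))
  rw [mgf_id_gaussianReal, ← Real.exp_add] at hchernoff
  refine hchernoff.trans_eq (congrArg Real.exp ?_)
  simp only [NNReal.coe_one]
  ring

theorem mul_exp_le_measureReal_Ioi_gaussianReal {v h : ℝ} (hv : 0 ≤ v) (hh : 0 ≤ h) :
    h * ((√(2 * Real.pi))⁻¹ * Real.exp (-((v + h) ^ 2 / 2)))
      ≤ (gaussianReal 0 1).real (Set.Ioi v) := by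
  have hpdf : ∀ x ∈ Set.Ioc v (v + h),
      (√(2 * Real.pi))⁻¹ * Real.exp (-((v + h) ^ 2 / 2)) ≤ gaussianPDFReal 0 1 x := by
    rintro x ⟨hvx, hxvh⟩
    have hsq : x ^ 2 ≤ (v + h) ^ 2 := pow_le_pow_left₀ (hv.trans hvx.le) hxvh 2
    simp only [gaussianPDFReal_def, NNReal.coe_one, mul_one, sub_zero]
    gcongr
    linarith
  calc h * ((√(2 * Real.pi))⁻¹ * Real.exp (-((v + h) ^ 2 / 2)))
    _ = ∫ _ in Set.Ioc v (v + h), (√(2 * Real.pi))⁻¹ * Real.exp (-((v + h) ^ 2 / 2)) := by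
        simp [hh]
    _ ≤ ∫ x in Set.Ioc v (v + h), gaussianPDFReal 0 1 x :=
        setIntegral_mono_on (integrableOn_const (by simp))
          (integrable_gaussianPDFReal 0 1).integrableOn measurableSet_Ioc hpdf
    _ = (gaussianReal 0 1).real (Set.Ioc v (v + h)) := by
        rw [measureReal_def, gaussianReal_apply_eq_integral 0 one_ne_zero,
          ENNReal.toReal_ofReal (integral_nonneg fun x ↦ gaussianPDFReal_nonneg _ _ _)]
    _ ≤ (gaussianReal 0 1).real (Set.Ioi v) := measureReal_mono Set.Ioc_subset_Ioi_self

theorem measureReal_Iic_gaussianReal_pow_le {v h : ℝ} (hv : 0 ≤ v) (hh : 0 ≤ h) (n : ℕ) :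
    (gaussianReal 0 1).real (Set.Iic v) ^ n
      ≤ Real.exp (-(n * (h * ((√(2 * Real.pi))⁻¹ * Real.exp (-((v + h) ^ 2 / 2)))))) := by
  set p := h * ((√(2 * Real.pi))⁻¹ * Real.exp (-((v + h) ^ 2 / 2)))
  have hle : (gaussianReal 0 1).real (Set.Iic v) ≤ Real.exp (-p) :=
    calc (gaussianReal 0 1).real (Set.Iic v)
      _ = 1 - (gaussianReal 0 1).real (Set.Ioi v) := by
          rw [← Set.compl_Ioi, probReal_compl_eq_one_sub measurableSet_Ioi]
      _ ≤ 1 - p := by gcongr; exact mul_exp_le_measureReal_Ioi_gaussianReal hv hh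
      _ ≤ Real.exp (-p) := Real.one_sub_le_exp_neg p
  calc (gaussianReal 0 1).real (Set.Iic v) ^ n
    _ ≤ Real.exp (-p) ^ n := pow_le_pow_left₀ measureReal_nonneg hle n
    _ = Real.exp (-(n * p)) := by rw [← Real.exp_nat_mul, mul_neg]

theorem exp_neg_three_mul_rpow_le {x a v : ℝ} (hx : 2 ≤ x) (ha : 0 ≤ a)
    (hv : v ^ 2 ≤ 2 * (1 - a) * Real.log x) :
    Real.exp (-3) * x ^ a ≤ x * Real.exp (-((v + (√(Real.log x))⁻¹) ^ 2 / 2)) := by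
  have hx₀ : 0 < x := by linarith
  have hlog : 0.69 ≤ Real.log x := by
    linarith [Real.log_le_log two_pos hx, Real.log_two_gt_d9]
  have hsqrt : 0 < √(Real.log x) := Real.sqrt_pos.2 (by linarith)
  have hsq : √(Real.log x) ^ 2 = Real.log x := Real.sq_sqrt (by linarith)
  have hcross : v * (√(Real.log x))⁻¹ ≤ 2 := by
    rw [← div_eq_mul_inv, div_le_iff₀ hsqrt]
    refine le_of_sq_le_sq ?_ (by positivity)
    rw [mul_pow, hsq]
    nlinarith
  have hinv : (√(Real.log x))⁻¹ ^ 2 ≤ 2 := by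
    rw [inv_pow, hsq]
    exact inv_le_of_inv_le₀ two_pos (by linarith)
  calc Real.exp (-3) * x ^ a
    _ = Real.exp (Real.log x + (-3 - (1 - a) * Real.log x)) := by
        rw [Real.rpow_def_of_pos hx₀, ← Real.exp_add]
        ring_nf
    _ = x * Real.exp (-3 - (1 - a) * Real.log x) := by rw [Real.exp_add, Real.exp_log hx₀]
    _ ≤ x * Real.exp (-((v + (√(Real.log x))⁻¹) ^ 2 / 2)) := by
        gcongr
        nlinarith

theorem measureReal_Iic_gaussianReal_pow_le_exp_neg_rpow {n : ℕ} (hn : 2 ≤ n) {a v : ℝ}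
    (ha : 0 ≤ a) (hv₀ : 0 ≤ v) (hv : v ^ 2 ≤ 2 * (1 - a) * Real.log n) :
    (gaussianReal 0 1).real (Set.Iic v) ^ n
      ≤ Real.exp (-((√(2 * Real.pi))⁻¹ * Real.exp (-3) * n ^ a / √(Real.log n))) := by
  refine (measureReal_Iic_gaussianReal_pow_le hv₀ (inv_nonneg.2 (Real.sqrt_nonneg (Real.log n)))
    n).trans (Real.exp_le_exp.2 (neg_le_neg ?_))
  calc (√(2 * Real.pi))⁻¹ * Real.exp (-3) * n ^ a / √(Real.log n)
    _ = (√(2 * Real.pi))⁻¹ * (√(Real.log n))⁻¹ * (Real.exp (-3) * n ^ a) := by ring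
    _ ≤ (√(2 * Real.pi))⁻¹ * (√(Real.log n))⁻¹
        * (n * Real.exp (-((v + (√(Real.log n))⁻¹) ^ 2 / 2))) :=
        mul_le_mul_of_nonneg_left (exp_neg_three_mul_rpow_le (mod_cast hn) ha hv) (by positivity)
    _ = _ := by ring

end GaussianTail

section NormalComparison

theorem sqrt_two_sub_add_sq_le {ε δ : ℝ} (hδ₀ : 0 ≤ δ) (hεδ : 100 * ε ≤ δ) (hδ : δ ≤ 1 / 100) :
    (√(2 - δ) + δ / 5) ^ 2 ≤ 2 * (1 - δ / 20) * (1 - ε) := by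
  have hsq : √(2 - δ) ^ 2 = 2 - δ := Real.sq_sqrt (by linarith)
  have hle : √(2 - δ) ≤ 1.42 := by nlinarith [Real.sqrt_nonneg (2 - δ)]
  nlinarith

theorem exp_neg_sq_mul_sqrt_log_eq_rpow {x ε : ℝ} (hx : 1 ≤ x) (hε : 0 < ε) (δ : ℝ) :
    Real.exp (-((δ * √(Real.log x) / (5 * √ε)) ^ 2 / 2)) = x ^ (-(δ ^ 2 / (50 * ε))) := by
  rw [Real.rpow_def_of_pos (by linarith), div_pow, mul_pow, mul_pow,
    Real.sq_sqrt (Real.log_nonneg hx), Real.sq_sqrt hε.le]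
  congr 1
  field_simp
  ring

variable {ι : Type*} [Fintype ι]

theorem measureReal_Iic_equicorrelatedGaussian_sqrt_log_le {ε δ : ℝ} (hι : 2 ≤ Fintype.card ι)
    (hε : 0 < ε) (hεδ : 100 * ε ≤ δ) (hδ : δ ≤ 1 / 100) :
    (equicorrelatedGaussian ι ε).real (Set.Iic fun _ ↦ √((2 - δ) * Real.log (Fintype.card ι)))
      ≤ Real.exp (-((√(2 * Real.pi))⁻¹ * Real.exp (-3) * Fintype.card ι ^ (δ / 20)
          / √(Real.log (Fintype.card ι))))
        + (Fintype.card ι : ℝ) ^ (-(δ ^ 2 / (50 * ε))) := by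
  have hδ₀ : 0 ≤ δ := by linarith
  have hone : (1 : ℝ) ≤ Fintype.card ι := by exact_mod_cast one_le_two.trans hι
  have hlog := Real.log_nonneg hone
  set L := Real.log (Fintype.card ι)
  set t := δ * √L / (5 * √ε) with ht
  set v := (√(2 - δ) + δ / 5) * √L / √(1 - ε) with hv
  have hsqrt₁ : 0 < √(1 - ε) := Real.sqrt_pos.2 (by linarith)
  have huv : √((2 - δ) * L) + √ε * t ≤ √(1 - ε) * v := by
    rw [Real.sqrt_mul (by linarith), ht, hv]
    apply le_of_eq
    field_simp
  have hv_sq : v ^ 2 ≤ 2 * (1 - δ / 20) * L := by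
    rw [hv, div_pow, mul_pow, Real.sq_sqrt hlog, Real.sq_sqrt (by linarith),
      div_le_iff₀ (by linarith)]
    nlinarith [sqrt_two_sub_add_sq_le hδ₀ hεδ hδ]
  refine (measureReal_Iic_equicorrelatedGaussian_le (by linarith) huv).trans ?_
  rw [add_comm, ← exp_neg_sq_mul_sqrt_log_eq_rpow hone hε]
  exact add_le_add
    (measureReal_Iic_gaussianReal_pow_le_exp_neg_rpow hι (by positivity) (by positivity) hv_sq)
    (measureReal_Iic_neg_gaussianReal_le (by positivity))

theorem measureReal_Iic_sqrt_log_le {ν : Measure (ι → ℝ)} [IsGaussian ν] {ε δ : ℝ}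
    (hmean : ν[id] = 0) (hvar : ∀ i, ∫ y, y i * y i ∂ν = 1)
    (hcov : ∀ i j, i ≠ j → ∫ y, y i * y j ∂ν ≤ ε) (hι : 2 ≤ Fintype.card ι) (hε : 0 < ε)
    (hεδ : 100 * ε ≤ δ) (hδ : δ ≤ 1 / 100) :
    ν.real (Set.Iic fun _ ↦ √((2 - δ) * Real.log (Fintype.card ι)))
      ≤ Real.exp (-((√(2 * Real.pi))⁻¹ * Real.exp (-3) * Fintype.card ι ^ (δ / 20)
          / √(Real.log (Fintype.card ι))))
        + (Fintype.card ι : ℝ) ^ (-(δ ^ 2 / (50 * ε))) := by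
  classical
  have hmoment := integral_eval_mul_eval_equicorrelatedGaussian (ι := ι) hε.le (by linarith)
  refine (measureReal_Iic_le_of_integral_mul_le hmean (integral_id_equicorrelatedGaussian ε)
    (fun i ↦ ?_) (fun i j hij ↦ ?_) _).trans
    (measureReal_Iic_equicorrelatedGaussian_sqrt_log_le hι hε hεδ hδ)
  · rw [hvar, hmoment, if_pos rfl]
  · rw [hmoment, if_neg hij]
    exact hcov i j hij

theorem isGaussian_map_of_map_sum_eq_gaussianReal {Ω : Type*} [MeasurableSpace Ω] {μ : Measure Ω}
    {Y : ι → Ω → ℝ} (hY : ∀ i, Measurable (Y i))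
    (hgauss : ∀ c : ι → ℝ, ∃ (m : ℝ) (v : ℝ≥0),
      μ.map (fun ω ↦ ∑ i, c i * Y i ω) = gaussianReal m v) :
    IsGaussian (μ.map fun ω i ↦ Y i ω) := by
  classical
  refine isGaussian_of_map_eq_gaussianReal fun ℓ ↦ ?_
  have hcomp : (ℓ ∘ fun ω i ↦ Y i ω) = fun ω ↦ ∑ i, ℓ (Pi.single i 1) * Y i ω := by
    ext ω
    rw [Function.comp_apply, pi_eq_sum_univ' fun i ↦ Y i ω, _root_.map_sum]
    exact sum_congr rfl fun i _ ↦ (_root_.map_smul ℓ _ _).trans (mul_comm _ _)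
  rw [Measure.map_map (by fun_prop) (measurable_pi_lambda _ hY), hcomp]
  exact hgauss _

end NormalComparison

/-- Harper's Normal Comparison Result 1 (quantitative Slepian): if `Y₁, …, Y_k` are
mean-zero variance-one jointly Gaussian with pairwise covariances at most `ε`, then
for `100ε ≤ δ ≤ 1/100`,
`P(max_l Yₗ ≤ √((2−δ) log k)) ≤ exp(−Θ(k^{δ/20}/√(log k))) + k^{−δ²/(50ε)}`. -/
theorem stmt_18 :
    ∃ ε₀ c : ℝ, 0 < ε₀ ∧ 0 < c ∧
      ∀ (Ω : Type) (_ : MeasurableSpace Ω) (μ : Measure Ω), IsProbabilityMeasure μ →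
      ∀ (k : ℕ) (Y : Fin k → Ω → ℝ) (ε δ : ℝ),
      2 ≤ k → 0 ≤ ε → ε ≤ ε₀ →
      (∀ l, Measurable (Y l)) →
      (∀ l, (∫ ω, Y l ω ∂μ) = 0) →
      (∀ l, (∫ ω, (Y l ω) ^ 2 ∂μ) = 1) →
      (∀ cv : Fin k → ℝ, ∃ (m : ℝ) (v : NNReal),
        Measure.map (fun ω => ∑ l, cv l * Y l ω) μ = gaussianReal m v) →
      (∀ l₁ l₂ : Fin k, l₁ ≠ l₂ → (∫ ω, Y l₁ ω * Y l₂ ω ∂μ) ≤ ε) →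
      100 * ε ≤ δ → δ ≤ 1 / 100 →
      (μ {ω | ∀ l, Y l ω ≤ Real.sqrt ((2 - δ) * Real.log k)}).toReal
        ≤ Real.exp (-(c * (k : ℝ) ^ (δ / 20) / Real.sqrt (Real.log k)))
          + (k : ℝ) ^ (-(δ ^ 2 / (50 * ε))) := by
  refine ⟨1, (√(2 * Real.pi))⁻¹ * Real.exp (-3), one_pos, by positivity, ?_⟩
  intro Ω _ μ _ k Y ε δ hk hε₀ _ hmeas hmean hvar hgauss hcov hεδ hδ
  rcases hε₀.eq_or_lt with rfl | hε
  · -- Division by zero: `δ ^ 2 / (50 * 0) = 0`, so the second summand is `k ^ 0 = 1`.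
    refine measureReal_le_one.trans (le_add_of_nonneg_of_le (Real.exp_nonneg _) ?_)
    simp
  have hY : Measurable fun ω i ↦ Y i ω := measurable_pi_lambda _ hmeas
  set ν := μ.map fun ω i ↦ Y i ω
  have : IsGaussian ν := isGaussian_map_of_map_sum_eq_gaussianReal hmeas hgauss
  have hν {g : (Fin k → ℝ) → ℝ} (hg : Continuous g) : ∫ y, g y ∂ν = ∫ ω, g fun i ↦ Y i ω ∂μ :=
    integral_map hY.aemeasurable hg.aestronglyMeasurable
  have hbound := measureReal_Iic_sqrt_log_le (ν := ν) (ε := ε) (δ := δ)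
    (integral_id_eq_zero_of_integral_eval_eq_zero IsGaussian.integrable_id fun i ↦
      (hν (continuous_apply i)).trans (hmean i))
    (fun i ↦ by simpa only [hν (by fun_prop : Continuous fun y : Fin k → ℝ ↦ y i * y i), pow_two]
      using hvar i)
    (fun i j hij ↦ (hν (by fun_prop)).trans_le (hcov i j hij)) (by simpa using hk) hε hεδ hδ
  rw [Fintype.card_fin, map_measureReal_apply hY measurableSet_Iic] at hbound
  exact hbound
end
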